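/- arXiv:1502.07205 — 6 statements merged into one kernel-verified Lean document; each statement's English description precedes it below -/
import Mathlib

section
/- Let h be a complex Hilbert space and let A, B be bounded selfadjoint operators on h with 0 ≤ A ≤ 1 and 0 ≤ B ≤ 1; set Q = A − B. Let φ: [0,1] → ℝ be continuous and differentiable on (0,1), and assume the Löwner representation hypothesis: a ∈ ℝ, b ≥ 0, and μ is a Borel probability measure on [−1,1] such that φ'(x) = a + b ∫_{[−1,1]} (2x−1)/(1−λ(2x−1)) dμ(λ) for every x ∈ (0,1); assume moreover ∫_{[−1,1]} 1/(1−|λ|) dμ(λ) < ∞. Fix ψ ∈ h and define F: (−1,1) → ℝ by F(λ) = (2/λ)⟨ψ, Qψ⟩ − (2/λ)∫_0^∞ ⟨ψ, R_{λ,t}(B) Q R_{λ,t}(B) ψ⟩ dt for λ ≠ 0, and F(0) = ⟨ψ, ((1−2B)Q + Q(1−2B))ψ⟩. Then F is μ-integrable on (−1,1) and the function α ↦ ⟨ψ, φ(B + α(A−B)) ψ⟩ (with φ applied via the continuous functional calculus) has right derivative at α = 0 equal to a⟨ψ, Qψ⟩ − (b/2) ∫_{(−1,1)} F(λ) dμ(λ).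 -/
/-!
Put `Y = 2B − 1`, `Q = A − B`, and let `m n = ∫ λ ^ n dμ` over `(−1, 1)`. Continuity of `φ` at the
endpoints forbids atoms of `μ` at `±1` unless `b = 0`: such an atom would give `φ'` a simple pole,
hence `φ` a logarithmic singularity (`loewner_atoms_eq_zero`). So only `(−1, 1)` contributes to the
Löwner integral, and since `∑ |λ| ^ n = 1 / (1 − |λ|)` is integrable there, `∑ |m n| < ∞`.
Expanding the Löwner kernel as a geometric series and integrating in `x` gives, on `[0, 1]`,
`φ x = k + a x + ∑ b m n / (2 (n + 2)) (2x − 1) ^ (n + 2)` (`exists_eq_powerSeries`).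

For `0 ≤ C ≤ 1` the operator `2C − 1` is a contraction, so this series may be evaluated at
`C = B + α Q`. Powers of contractions satisfy `‖X ^ n − Y ^ n‖ ≤ n ‖X − Y‖`, so the difference
quotients at `α = 0` are dominated by a multiple of `|m n|` and the series can be differentiated
from the right term by term (`hasDerivWithinAt_quadRe_cfc`). The derivative of `Y ^ (n + 1)` in the
direction `Q` is `∑ k ≤ n, Y ^ k Q Y ^ (n − k)`, written `powSum Y Q n`.

On the other side, the Neumann series of the resolvents and `∫₀^∞ (1 + t) ^ (−m − 2) dt = 1 / (m + 1)`
give `F λ = −2 ∑ λ ^ n / (n + 2) ⟨ψ, powSum Y Q (n + 1) ψ⟩` (`derivIntegrand_eq_tsum`). Integrating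
this against `μ` term by term produces the same series.
-/

open MeasureTheory
open scoped InnerProductSpace ENNReal

variable {H : Type*} [NormedAddCommGroup H] [InnerProductSpace ℂ H] [CompleteSpace H]

/-- The resolvent `R_{λ,t}(C) = (1 + λ(1−2C) + t)⁻¹` of a bounded operator `C`
(defined via `Ring.inverse`, which gives the genuine inverse when it exists). -/
noncomputable def resolventOp (l t : ℝ) (C : H →L[ℂ] H) : H →L[ℂ] H :=
  Ring.inverse (1 + (l:ℂ) • (1 - 2 • C) + (t:ℂ) • 1)

/-- The integrand
`F(λ) = (2/λ)⟨ψ,Qψ⟩ − (2/λ)∫_0^∞ ⟨ψ, R_{λ,t}(B) Q R_{λ,t}(B) ψ⟩ dt` for `λ ≠ 0`,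
with `F(0) = ⟨ψ, ((1−2B)Q + Q(1−2B))ψ⟩`. -/
noncomputable def derivIntegrand (B Q : H →L[ℂ] H) (ψ : H) (l : ℝ) : ℝ :=
  if l = 0 then (⟪ψ, (((1 : H →L[ℂ] H) - 2 • B) * Q + Q * ((1 : H →L[ℂ] H) - 2 • B)) ψ⟫_ℂ).re
  else (2/l) * (⟪ψ, Q ψ⟫_ℂ).re
    - (2/l) * ∫ t in Set.Ioi (0:ℝ), (⟪ψ, (resolventOp l t B * Q * resolventOp l t B) ψ⟫_ℂ).re

set_option linter.unusedSectionVars false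

/-! ### Absence of atoms, and moments of the measure -/

/-- A function continuous up to `1` cannot have a derivative bounded below by a positive multiple of
a simple pole at `1`: integrating would give a logarithmic divergence. -/
lemma eq_zero_of_pole_le_deriv {f f' : ℝ → ℝ} {a c : ℝ} (hf : ContinuousOn f (Set.Icc (0:ℝ) 1))
    (hd : ∀ x ∈ Set.Ioo (0:ℝ) 1, HasDerivAt f (f' x) x) (hc : 0 ≤ c)
    (hle : ∀ x ∈ Set.Ioo (1/2:ℝ) 1, a + c * ((2*x-1)/(2-2*x)) ≤ f' x) : c = 0 := by
  obtain ⟨M, hM⟩ := isCompact_Icc.exists_bound_of_continuousOn hf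
  have key : ∀ N : ℝ, 0 < N → c * N ≤ 4 * M + 2 * |a| + 2 * c := by
    intro N hN
    have he1 : Real.exp (-N) < 1 := by simpa using hN
    have he0 := Real.exp_pos (-N)
    set x := 1 - Real.exp (-N) / 2 with hx
    -- `-y - log (2 - 2 * y) / 2` is an antiderivative of the pole term `(2 * y - 1) / (2 - 2 * y)`,
    -- and the point `x` is chosen so that the logarithm equals `-N` there.
    have hKd : ∀ y ∈ Set.Ico (1/2:ℝ) 1, HasDerivAt
        (fun y => f y - a * y - c * (-y - Real.log (2 - 2*y) / 2))
        (f' y - a - c * ((2*y-1)/(2-2*y))) y := by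
      intro y hy
      have hy2 : (2 - 2*y) ≠ 0 := by have := hy.2; intro h; linarith
      have h1 := hd y ⟨by linarith [hy.1], hy.2⟩
      have h2 : HasDerivAt (fun y : ℝ => 2 - 2*y) (-2) y := by
        simpa using ((hasDerivAt_id y).const_mul 2).const_sub 2
      have h3 := (((hasDerivAt_id y).neg.sub ((h2.log hy2).div_const 2)).const_mul c)
      refine ((h1.sub ((hasDerivAt_id y).const_mul a)).sub h3).congr_deriv ?_
      rw [show 2*y-1 = 1-(2-2*y) by ring, sub_div, div_self hy2]
      ring
    have hmono : MonotoneOn (fun y => f y - a * y - c * (-y - Real.log (2 - 2*y) / 2))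
        (Set.Icc (1/2) x) := by
      apply monotoneOn_of_deriv_nonneg (convex_Icc _ _)
      · intro y hy
        exact (hKd y ⟨hy.1, by linarith [hy.2]⟩).continuousAt.continuousWithinAt
      · intro y hy
        rw [interior_Icc] at hy
        exact (hKd y ⟨hy.1.le, by linarith [hy.2]⟩).differentiableAt.differentiableWithinAt
      · intro y hy
        rw [interior_Icc] at hy
        rw [(hKd y ⟨hy.1.le, by linarith [hy.2]⟩).deriv]
        have := hle y ⟨hy.1, by linarith [hy.2]⟩
        linarith
    have h := hmono (Set.left_mem_Icc.2 (by linarith)) (Set.right_mem_Icc.2 (by linarith))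
      (by linarith : (1/2:ℝ) ≤ x)
    have hl : Real.log (2 - 2 * x) = -N := by
      rw [show 2 - 2 * x = Real.exp (-N) by rw [hx]; ring, Real.log_exp]
    have hl2 : Real.log (2 - 2 * (1/2 : ℝ)) = 0 := by norm_num
    simp only [hl, hl2] at h
    have m1 := abs_le.1 (hM x ⟨by linarith, by linarith⟩)
    have m2 := abs_le.1 (hM (1/2) ⟨by norm_num, by norm_num⟩)
    have h5 : |a * (x - 1/2)| ≤ |a| * 1 := by
      rw [abs_mul]; gcongr; rw [abs_le]; constructor <;> linarith
    have h6 := (abs_le.1 h5).1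
    have h7 : c * x ≤ c * 1 := by gcongr; linarith
    nlinarith
  by_contra hne
  have hpos : 0 < c := lt_of_le_of_ne hc (Ne.symm hne)
  have hM0 : 0 ≤ M := (norm_nonneg _).trans (hM 0 ⟨le_rfl, zero_le_one⟩)
  have h0 := abs_nonneg a
  have := key ((4 * M + 2 * |a| + 2 * c) / c + 1) (by positivity)
  rw [mul_add, mul_div_cancel₀ _ hne] at this
  linarith

/-- With `1 / 0 = 0` the finiteness hypothesis says nothing about `l = ±1`, so integrability is
only recorded on the open interval. -/
lemma integrable_weight {μ : Measure ℝ} [IsProbabilityMeasure μ]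
    (hμint : (∫⁻ l in Set.Icc (-1:ℝ) 1, ENNReal.ofReal (1 / (1 - |l|)) ∂μ) ≠ ⊤) :
    IntegrableOn (fun l : ℝ => 1 / (1 - |l|)) (Set.Ioo (-1:ℝ) 1) μ := by
  refine ⟨(by fun_prop : Measurable fun l : ℝ => 1 / (1 - |l|)).aestronglyMeasurable, ?_⟩
  rw [hasFiniteIntegral_iff_ofReal]
  · exact lt_of_le_of_lt (lintegral_mono_set Set.Ioo_subset_Icc_self) (lt_top_iff_ne_top.2 hμint)
  · filter_upwards [ae_restrict_mem measurableSet_Ioo] with l hl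
    have := abs_lt.2 hl
    exact one_div_nonneg.2 (by linarith)

lemma integrableOn_pow {μ : Measure ℝ} [IsProbabilityMeasure μ] (n : ℕ) :
    IntegrableOn (fun l : ℝ => l ^ n) (Set.Ioo (-1:ℝ) 1) μ := by
  refine Measure.integrableOn_of_bounded (M := 1) (measure_ne_top _ _)
    (by fun_prop : Measurable fun l : ℝ => l ^ n).aestronglyMeasurable ?_
  filter_upwards [ae_restrict_mem measurableSet_Ioo] with l hl
  rw [norm_pow]
  exact pow_le_one₀ (norm_nonneg _) (abs_lt.2 hl).le

/-- The partial sums of the absolute moments are bounded by `∫ 1 / (1 - |l|)`. -/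
lemma summable_abs_moment {μ : Measure ℝ} [IsProbabilityMeasure μ]
    (hw : IntegrableOn (fun l : ℝ => 1 / (1 - |l|)) (Set.Ioo (-1:ℝ) 1) μ) :
    Summable fun n : ℕ => ∫ l in Set.Ioo (-1:ℝ) 1, ‖l ^ n‖ ∂μ := by
  refine summable_of_sum_range_le (c := ∫ l in Set.Ioo (-1:ℝ) 1, 1 / (1 - |l|) ∂μ)
    (fun n => integral_nonneg fun l => norm_nonneg _) fun n => ?_
  rw [← integral_finsetSum _ fun i _ => (integrableOn_pow i).norm]
  refine setIntegral_mono_on (integrable_finsetSum _ fun i _ => (integrableOn_pow i).norm) hw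
    measurableSet_Ioo fun l hl => ?_
  have hl1 := abs_lt.2 hl
  have hs := hasSum_geometric_of_lt_one (abs_nonneg l) hl1
  simp only [norm_pow, Real.norm_eq_abs, one_div]
  exact sum_le_hasSum _ (fun i _ => by positivity) hs

/-- A power series with bounded coefficients is integrable on `(-1, 1)` and may be integrated
termwise, being dominated by a multiple of `1 / (1 - |l|)`. -/
lemma integrable_tsum_pow {μ : Measure ℝ} [IsProbabilityMeasure μ]
    (hw : IntegrableOn (fun l : ℝ => 1 / (1 - |l|)) (Set.Ioo (-1:ℝ) 1) μ)
    {d : ℕ → ℝ} {K : ℝ} (hd : ∀ n, |d n| ≤ K) :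
    IntegrableOn (fun l : ℝ => ∑' n, l ^ n * d n) (Set.Ioo (-1:ℝ) 1) μ ∧
    HasSum (fun n => (∫ l in Set.Ioo (-1:ℝ) 1, l ^ n ∂μ) * d n)
      (∫ l in Set.Ioo (-1:ℝ) 1, ∑' n, l ^ n * d n ∂μ) := by
  have hb : ∀ l ∈ Set.Ioo (-1:ℝ) 1, ∀ n : ℕ, ‖l ^ n * d n‖ ≤ |l| ^ n * K := fun l hl n => by
    rw [norm_mul, norm_pow, Real.norm_eq_abs, Real.norm_eq_abs]
    gcongr
    exact hd n
  have hg : ∀ l ∈ Set.Ioo (-1:ℝ) 1, HasSum (fun n : ℕ => |l| ^ n * K) ((1 - |l|)⁻¹ * K) :=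
    fun l hl => (hasSum_geometric_of_lt_one (abs_nonneg l) (abs_lt.2 hl)).mul_right K
  have hs : ∀ l ∈ Set.Ioo (-1:ℝ) 1, Summable fun n : ℕ => l ^ n * d n := fun l hl =>
    Summable.of_norm_bounded (hg l hl).summable (hb l hl)
  constructor
  · refine Integrable.mono' (hw.mul_const K) ?_ ?_
    · refine aestronglyMeasurable_of_tendsto_ae Filter.atTop
        (f := fun N l => ∑ n ∈ Finset.range N, l ^ n * d n) (fun N => ?_) ?_
      · exact (by fun_prop : Measurable fun l : ℝ =>
          ∑ n ∈ Finset.range N, l ^ n * d n).aestronglyMeasurable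
      · filter_upwards [ae_restrict_mem measurableSet_Ioo] with l hl
        exact (hs l hl).hasSum.tendsto_sum_nat
    · filter_upwards [ae_restrict_mem measurableSet_Ioo] with l hl
      rw [one_div]
      exact tsum_of_norm_bounded (hg l hl) (hb l hl)
  · have := hasSum_integral_of_summable_integral_norm
      (μ := μ.restrict (Set.Ioo (-1:ℝ) 1)) (F := fun (n : ℕ) (l : ℝ) => l ^ n * d n)
      (fun n => (integrableOn_pow n).mul_const _) ?_
    · simpa only [integral_mul_const] using this
    · refine Summable.of_nonneg_of_le (fun n => integral_nonneg fun l => norm_nonneg _) (fun n => ?_)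
        ((summable_abs_moment hw).mul_right K)
      simp only [norm_mul, integral_mul_const]
      gcongr
      exact hd n

/-! ### Power series expansion and termwise one-sided differentiation -/

/-- Termwise antiderivative of the expansion of `φ'`; continuity of both sides extends the identity
to the endpoints of `[0, 1]`. -/
lemma exists_eq_powerSeries {φ φ' : ℝ → ℝ} {a : ℝ} {c : ℕ → ℝ}
    (hφc : ContinuousOn φ (Set.Icc (0:ℝ) 1))
    (hφd : ∀ x ∈ Set.Ioo (0:ℝ) 1, HasDerivAt φ (φ' x) x)
    (hc : Summable fun n => |c n|)
    (hrep : ∀ x ∈ Set.Ioo (0:ℝ) 1, φ' x = a + ∑' n, c n * (2*x - 1) ^ (n+1)) :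
    ∃ k : ℝ, ∀ x ∈ Set.Icc (0:ℝ) 1,
      φ x = k + a * x + ∑' n : ℕ, c n / (2 * (n+2)) * (2*x - 1) ^ (n+2) := by
  have hpow : ∀ x ∈ Set.Icc (0:ℝ) 1, ∀ n : ℕ, |(2*x-1)^n| ≤ 1 := fun x hx n => by
    rw [abs_pow]
    exact pow_le_one₀ (abs_nonneg _) (abs_le.2 ⟨by linarith [hx.1], by linarith [hx.2]⟩)
  have hcoef : ∀ n : ℕ, |c n / (2 * (n+2))| ≤ |c n| := fun n => by
    rw [abs_div]
    refine div_le_self (abs_nonneg _) ?_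
    rw [abs_of_pos (by positivity)]
    have : (0:ℝ) ≤ n := n.cast_nonneg
    linarith
  have hbound : ∀ n : ℕ, ∀ x ∈ Set.Icc (0:ℝ) 1,
      ‖c n / (2 * (n+2)) * (2*x - 1) ^ (n+2)‖ ≤ |c n| := fun n x hx => by
    rw [norm_mul, Real.norm_eq_abs, Real.norm_eq_abs]
    exact (mul_le_of_le_one_right (abs_nonneg _) (hpow x hx _)).trans (hcoef n)
  set S : ℝ → ℝ := fun x => ∑' n : ℕ, c n / (2 * (n+2)) * (2*x - 1) ^ (n+2) with hS
  have hScont : ContinuousOn S (Set.Icc 0 1) :=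
    continuousOn_tsum (fun n => by fun_prop) hc hbound
  have hSd : ∀ x ∈ Set.Ioo (0:ℝ) 1, HasDerivAt S (∑' n, c n * (2*x - 1) ^ (n+1)) x := by
    intro x hx
    refine hasDerivAt_tsum_of_isPreconnected (u := fun n => |c n|)
      (g := fun (n : ℕ) x => c n / (2 * (n+2)) * (2*x - 1) ^ (n+2))
      (g' := fun n x => c n * (2*x - 1) ^ (n+1)) hc isOpen_Ioo
      isPreconnected_Ioo (fun n y hy => ?_) (fun n y hy => ?_) hx ?_ hx
    · have h := ((((hasDerivAt_id y).const_mul 2).sub_const 1).pow (n+2)).const_mul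
        (c n / (2 * (n+2)))
      refine h.congr_deriv ?_
      have : (n:ℝ) + 2 ≠ 0 := by positivity
      simp only [id, mul_one, Nat.add_succ_sub_one]
      push_cast
      field_simp
    · rw [norm_mul, Real.norm_eq_abs, Real.norm_eq_abs]
      exact mul_le_of_le_one_right (abs_nonneg _) (hpow y ⟨hy.1.le, hy.2.le⟩ _)
    · exact Summable.of_norm_bounded hc fun n => hbound n x ⟨hx.1.le, hx.2.le⟩
  refine ⟨φ 0 - S 0, fun x hx => ?_⟩
  rcases hx.1.eq_or_lt with h0 | h0
  · subst h0; change _ = _ + S 0; ring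
  obtain ⟨y, hy, he⟩ := exists_hasDerivAt_eq_slope (fun x => φ x - a * x - S x) (fun _ => 0) h0
    (((hφc.sub (by fun_prop)).sub hScont).mono (Set.Icc_subset_Icc_right hx.2))
    (fun y hy => by
      have hy' : y ∈ Set.Ioo (0:ℝ) 1 := ⟨hy.1, hy.2.trans_le hx.2⟩
      refine (((hφd y hy').sub ((hasDerivAt_id y).const_mul a)).sub (hSd y hy')).congr_deriv ?_
      rw [hrep y hy']
      ring)
  rw [eq_comm, div_eq_zero_iff] at he
  rcases he with he | he
  · change _ = _ + S x
    linarith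
  · linarith

/-- One-sided termwise differentiation at a boundary point: dominated convergence applied to the
difference quotients, for which a Lipschitz bound at the base point suffices. -/
lemma hasDerivWithinAt_tsum_of_lipschitz {g : ℕ → ℝ → ℝ} {g' u : ℕ → ℝ} (hu : Summable u)
    (hg : ∀ n, HasDerivWithinAt (g n) (g' n) (Set.Ici 0) 0)
    (hs : ∀ α ∈ Set.Icc (0:ℝ) 1, Summable fun n => g n α)
    (hl : ∀ n, ∀ α ∈ Set.Icc (0:ℝ) 1, |g n α - g n 0| ≤ u n * α) :
    HasDerivWithinAt (fun α => ∑' n, g n α) (∑' n, g' n) (Set.Ici 0) 0 := by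
  rw [hasDerivWithinAt_iff_tendsto_slope, Set.Ici_sdiff_left]
  have h01 : Set.Ioc (0:ℝ) 1 ∈ nhdsWithin (0:ℝ) (Set.Ioi 0) := Ioc_mem_nhdsGT zero_lt_one
  have h := tendsto_tsum_of_dominated_convergence (𝓕 := nhdsWithin (0:ℝ) (Set.Ioi 0))
    (f := fun α n => slope (g n) 0 α) (g := g') hu
    (fun n => by
      have := hg n
      rwa [hasDerivWithinAt_iff_tendsto_slope, Set.Ici_sdiff_left] at this)
    (by
      filter_upwards [h01] with α hα n
      rw [slope_def_field, sub_zero, norm_div, Real.norm_eq_abs, Real.norm_eq_abs,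
        abs_of_pos hα.1, div_le_iff₀ hα.1]
      exact hl n α ⟨hα.1.le, hα.2⟩)
  refine h.congr' ?_
  filter_upwards [h01] with α hα
  simp only [slope_def_field]
  rw [tsum_div_const, (hs α ⟨hα.1.le, hα.2⟩).tsum_sub (hs 0 ⟨le_rfl, zero_le_one⟩)]

/-! ### Powers of contractions -/

/-- The real-linear continuous functional `T ↦ Re ⟨ψ, T ψ⟩`. -/
noncomputable def quadRe (ψ : H) : (H →L[ℂ] H) →L[ℝ] ℝ :=
  Complex.reCLM.comp (((innerSL ℂ ψ).comp (ContinuousLinearMap.apply ℂ H ψ)).restrictScalars ℝ)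

lemma quadRe_apply (ψ : H) (T : H →L[ℂ] H) : quadRe ψ T = (⟪ψ, T ψ⟫_ℂ).re := rfl

lemma abs_quadRe_le (ψ : H) (T : H →L[ℂ] H) : |quadRe ψ T| ≤ ‖ψ‖ ^ 2 * ‖T‖ := by
  rw [quadRe_apply]
  calc |(⟪ψ, T ψ⟫_ℂ).re| ≤ ‖⟪ψ, T ψ⟫_ℂ‖ := Complex.abs_re_le_norm _
    _ ≤ ‖ψ‖ * ‖T ψ‖ := norm_inner_le_norm _ _
    _ ≤ ‖ψ‖ * (‖T‖ * ‖ψ‖) := by gcongr; exact T.le_opNorm ψ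
    _ = _ := by ring

/-- The noncommutative sum `∑ k ≤ m, Y ^ k * Q * Y ^ (m - k)`, i.e. the derivative of the
`(m + 1)`-st power at `Y` in the direction `Q`. -/
def powSum {R : Type*} [Ring R] (Y Q : R) (m : ℕ) : R :=
  ∑ k ∈ Finset.range (m + 1), Y ^ k * Q * Y ^ (m - k)

lemma norm_pow_le_one' {Y : H →L[ℂ] H} (hY : ‖Y‖ ≤ 1) (n : ℕ) : ‖Y ^ n‖ ≤ 1 := by
  induction n with
  | zero => exact ContinuousLinearMap.norm_id_le (𝕜 := ℂ) (E := H)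
  | succ n ih =>
    rw [pow_succ]
    exact (norm_mul_le _ _).trans (mul_le_one₀ ih (norm_nonneg _) hY)

lemma norm_powSum_le {Y Q : H →L[ℂ] H} (hY : ‖Y‖ ≤ 1) (m : ℕ) :
    ‖powSum Y Q m‖ ≤ (m + 1) * ‖Q‖ := by
  refine (norm_sum_le_of_le _ (f := fun k => Y ^ k * Q * Y ^ (m - k)) (n := fun _ => ‖Q‖)
    fun k _ => ?_).trans (by simp)
  calc _ ≤ ‖Y ^ k * Q‖ * ‖Y ^ (m - k)‖ := norm_mul_le _ _
    _ ≤ (‖Y ^ k‖ * ‖Q‖) * ‖Y ^ (m - k)‖ := by gcongr; exact norm_mul_le _ _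
    _ ≤ (1 * ‖Q‖) * 1 := by gcongr <;> exact norm_pow_le_one' hY _
    _ = ‖Q‖ := by ring

lemma norm_pow_sub_pow_le {X Y : H →L[ℂ] H} (hX : ‖X‖ ≤ 1) (hY : ‖Y‖ ≤ 1) (n : ℕ) :
    ‖X ^ n - Y ^ n‖ ≤ n * ‖X - Y‖ := by
  induction n with
  | zero => simp
  | succ n ih =>
    have : X ^ (n+1) - Y ^ (n+1) = X ^ n * (X - Y) + (X ^ n - Y ^ n) * Y := by
      rw [pow_succ, pow_succ, mul_sub, sub_mul]; abel
    rw [this]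
    calc _ ≤ ‖X ^ n * (X - Y)‖ + ‖(X ^ n - Y ^ n) * Y‖ := norm_add_le _ _
      _ ≤ ‖X ^ n‖ * ‖X - Y‖ + ‖X ^ n - Y ^ n‖ * ‖Y‖ := by gcongr <;> exact norm_mul_le _ _
      _ ≤ 1 * ‖X - Y‖ + (n * ‖X - Y‖) * 1 := by
        gcongr
        exact norm_pow_le_one' hX _
      _ = _ := by push_cast; ring

lemma hasDerivAt_pow_line (Y D : H →L[ℂ] H) (n : ℕ) :
    HasDerivAt (fun α : ℝ => (Y + α • D) ^ (n + 1)) (powSum Y D n) 0 := by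
  have h0 : HasDerivAt (fun α : ℝ => Y + α • D) D 0 := by
    simpa using ((hasDerivAt_id (0:ℝ)).smul_const D).const_add Y
  induction n with
  | zero => simpa [powSum] using h0
  | succ n ih =>
    have h := ih.mul h0
    simp only [zero_smul, add_zero] at h
    refine (h.congr_deriv ?_).congr_of_eventuallyEq (.of_forall fun α => pow_succ _ _)
    rw [powSum, powSum, Finset.sum_range_succ _ (n + 1), Finset.sum_mul]
    congr 1
    · refine Finset.sum_congr rfl fun k hk => ?_
      rw [mul_assoc, ← pow_succ, Nat.succ_sub (Finset.mem_range_succ_iff.1 hk)]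
    · simp

lemma powSum_mul_left {R : Type*} [Ring R] (Y Q : R) (m : ℕ) (r : ℕ) :
    powSum Y (r • Q) m = r • powSum Y Q m := by
  simp only [powSum, Finset.smul_sum, mul_smul_comm, smul_mul_assoc]

/-! ### The resolvent integral as a power series -/

/-- Neumann series of the resolvent, from `1 + l (1 - 2B) + t = (1 + t) (1 - l / (1 + t) (2B - 1))`. -/
lemma resolventOp_eq_tsum {B : H →L[ℂ] H} (hY : ‖2 • B - 1‖ ≤ 1) {l t : ℝ} (hl : |l| < 1)
    (ht : 0 < t) :
    ‖(l / (1 + t)) • (2 • B - 1)‖ < 1 ∧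
    resolventOp l t B = ∑' k : ℕ, (1 + t)⁻¹ • ((l / (1 + t)) • (2 • B - 1)) ^ k := by
  have hs : (0:ℝ) < 1 + t := by linarith
  set Y := 2 • B - 1 with hYdef
  set z := (l / (1 + t)) • Y with hz
  have hz1 : ‖z‖ < 1 := by
    rw [hz, norm_smul, Real.norm_eq_abs, abs_div, abs_of_pos hs]
    calc |l| / (1 + t) * ‖Y‖ ≤ |l| / (1 + t) * 1 := by gcongr
      _ < 1 := by rw [mul_one, div_lt_one hs]; linarith
  refine ⟨hz1, ?_⟩
  have hM : 1 + (l:ℂ) • (1 - 2 • B) + (t:ℂ) • (1 : H →L[ℂ] H) = (1 + t) • (1 - z) := by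
    rw [Complex.coe_smul, Complex.coe_smul, hz, smul_sub (1 + t), smul_smul, mul_div_cancel₀ _ hs.ne', hYdef]
    module
  rw [resolventOp, hM, (summable_geometric_of_norm_lt_one hz1).tsum_const_smul]
  exact Ring.inverse_unit (⟨(1 + t) • (1 - z), (1 + t)⁻¹ • ∑' k : ℕ, z ^ k,
    by rw [smul_mul_smul_comm, mul_inv_cancel₀ hs.ne', one_smul, mul_neg_geom_series z hz1],
    by rw [smul_mul_smul_comm, inv_mul_cancel₀ hs.ne', one_smul, geom_series_mul_neg z hz1]⟩ :
      (H →L[ℂ] H)ˣ)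

/-- Cauchy product of the two Neumann series in `R Q R`. -/
lemma hasSum_quadRe_resolvent {B : H →L[ℂ] H} (hY : ‖2 • B - 1‖ ≤ 1) (Q : H →L[ℂ] H) (ψ : H)
    {l t : ℝ} (hl : |l| < 1) (ht : 0 < t) :
    HasSum (fun m : ℕ => l ^ m * quadRe ψ (powSum (2 • B - 1) Q m) * ((1 + t) ^ (m + 2))⁻¹)
      (quadRe ψ (resolventOp l t B * Q * resolventOp l t B)) := by
  have hs : (0:ℝ) < 1 + t := by linarith
  obtain ⟨hz1, hR⟩ := resolventOp_eq_tsum hY hl ht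
  set Y := 2 • B - 1 with hYdef
  set z := (l / (1 + t)) • Y with hz
  have hsz : Summable fun k : ℕ => ‖(1 + t)⁻¹ • z ^ k‖ := by
    simp only [norm_smul]
    exact (summable_norm_geometric_of_norm_lt_one hz1).mul_left _
  have hszQ : Summable fun k : ℕ => ‖((1 + t)⁻¹ • z ^ k) * Q‖ :=
    Summable.of_nonneg_of_le (fun _ => norm_nonneg _) (fun k => norm_mul_le _ _)
      (hsz.mul_right ‖Q‖)
  have h := hasSum_sum_range_mul_of_summable_norm hszQ hsz
  rw [hsz.of_norm.tsum_mul_right, ← hR] at h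
  refine ((quadRe ψ).hasSum h).congr_fun fun m => ?_
  have hsum : ∑ k ∈ Finset.range (m + 1),
      ((1 + t)⁻¹ • z ^ k) * Q * ((1 + t)⁻¹ • z ^ (m - k)) =
      (l ^ m * ((1 + t) ^ (m + 2))⁻¹) • powSum Y Q m := by
    rw [powSum, Finset.smul_sum]
    refine Finset.sum_congr rfl fun k hk => ?_
    have hkm : k + (m - k) = m := Nat.add_sub_cancel' (Finset.mem_range_succ_iff.1 hk)
    rw [hz, smul_pow, smul_pow]
    simp only [smul_mul_assoc, mul_smul_comm, smul_smul]
    congr 1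
    rw [← hkm, pow_add, Nat.add_sub_cancel_left, div_pow, div_pow, pow_add, pow_add]
    have : 1 + t ≠ 0 := hs.ne'
    field_simp
  rw [hsum, map_smul, smul_eq_mul]
  ring

lemma integral_inv_pow (m : ℕ) :
    IntegrableOn (fun t : ℝ => ((1 + t) ^ (m + 2))⁻¹) (Set.Ioi 0) ∧
    ∫ t in Set.Ioi (0:ℝ), ((1 + t) ^ (m + 2))⁻¹ = ((m:ℝ) + 1)⁻¹ := by
  have hm : (m:ℝ) + 1 ≠ 0 := by positivity
  have hd : ∀ t ∈ Set.Ici (0:ℝ), HasDerivAt (fun t : ℝ => -(((m:ℝ)+1)⁻¹ * ((1 + t) ^ (m + 1))⁻¹))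
      (((1 + t) ^ (m + 2))⁻¹) t := by
    intro t ht
    have h1 : (1 + t) ≠ 0 := by have : (0:ℝ) ≤ t := ht; positivity
    have := (((((hasDerivAt_id t).const_add 1).pow (m+1)).inv (pow_ne_zero _ h1)).const_mul
      ((m:ℝ)+1)⁻¹).neg
    refine this.congr_deriv ?_
    simp only [id, mul_one, Nat.add_sub_cancel, Pi.pow_apply]
    push_cast
    field_simp
    ring
  have hpos : ∀ t ∈ Set.Ioi (0:ℝ), 0 ≤ ((1 + t) ^ (m + 2))⁻¹ := fun t ht => by
    have : (0:ℝ) < t := ht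
    positivity
  have hlim : Filter.Tendsto (fun t : ℝ => -(((m:ℝ)+1)⁻¹ * ((1 + t) ^ (m + 1))⁻¹)) Filter.atTop
      (nhds 0) := by
    have h1 : Filter.Tendsto (fun t : ℝ => (1 + t) ^ (m + 1)) Filter.atTop Filter.atTop :=
      (Filter.tendsto_pow_atTop (by simp)).comp (Filter.tendsto_atTop_add_const_left _ _ Filter.tendsto_id)
    simpa using (h1.inv_tendsto_atTop.const_mul ((m:ℝ)+1)⁻¹).neg
  refine ⟨integrableOn_Ioi_deriv_of_nonneg' hd hpos hlim, ?_⟩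
  rw [integral_Ioi_of_hasDerivAt_of_nonneg' hd hpos hlim]
  simp

/-- The value at `l = 0` is the limit of the expression for `l ≠ 0`, so one power series covers
both cases. For `l ≠ 0` the term `m = 0` of the integrated series cancels `(2 / l) ⟨ψ, Q ψ⟩`. -/
lemma derivIntegrand_eq_tsum {B : H →L[ℂ] H} (hY : ‖2 • B - 1‖ ≤ 1) (Q : H →L[ℂ] H) (ψ : H)
    {l : ℝ} (hl : |l| < 1) :
    derivIntegrand B Q ψ l =
      ∑' n : ℕ, l ^ n * (-2 / ((n:ℝ) + 2) * quadRe ψ (powSum (2 • B - 1) Q (n + 1))) := by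
  rw [derivIntegrand]
  split_ifs with h0
  · subst h0
    rw [tsum_eq_single 0 (fun n hn => by simp [hn])]
    rw [← quadRe_apply]
    have : (1 - 2 • B) * Q + Q * (1 - 2 • B) = -(powSum (2 • B - 1) Q 1) := by
      rw [powSum, Finset.sum_range_succ, Finset.sum_range_one]
      simp only [pow_zero, one_mul, pow_one, mul_one, Nat.sub_zero, Nat.sub_self]
      simp only [sub_mul, mul_sub, one_mul, mul_one]
      abel
    rw [this, map_neg]
    norm_num
  set q : ℕ → ℝ := fun m => quadRe ψ (powSum (2 • B - 1) Q m) with hq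
  have hqb : ∀ m, |q m| ≤ (m + 1) * (‖ψ‖ ^ 2 * ‖Q‖) := fun m => by
    refine (abs_quadRe_le _ _).trans ?_
    calc _ ≤ ‖ψ‖ ^ 2 * ((m + 1) * ‖Q‖) := by gcongr; exact norm_powSum_le hY m
      _ = _ := by ring
  have hterm : ∀ m : ℕ, |l ^ m * q m * ((m:ℝ) + 1)⁻¹| ≤ |l| ^ m * (‖ψ‖ ^ 2 * ‖Q‖) := fun m => by
    have hm : (0:ℝ) < m + 1 := by positivity
    rw [abs_mul, abs_mul, abs_pow, abs_inv, abs_of_pos hm, mul_assoc]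
    refine mul_le_mul_of_nonneg_left ?_ (by positivity)
    rw [← div_eq_mul_inv, div_le_iff₀ hm, mul_comm]
    exact hqb m
  have hgeo : Summable fun m : ℕ => |l| ^ m * (‖ψ‖ ^ 2 * ‖Q‖) :=
    (summable_geometric_of_lt_one (abs_nonneg l) hl).mul_right _
  have hint := hasSum_integral_of_summable_integral_norm
    (μ := volume.restrict (Set.Ioi (0:ℝ)))
    (F := fun (m : ℕ) (t : ℝ) => l ^ m * q m * ((1 + t) ^ (m + 2))⁻¹)
    (fun m => (integral_inv_pow m).1.const_mul _) (by
      refine hgeo.of_nonneg_of_le (fun m => integral_nonneg fun t => norm_nonneg _) fun m => ?_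
      refine le_trans (le_of_eq ?_) (hterm m)
      have hm : (0:ℝ) < m + 1 := by positivity
      rw [abs_mul, abs_inv, abs_of_pos hm, ← (integral_inv_pow m).2, ← integral_const_mul]
      refine setIntegral_congr_fun measurableSet_Ioi fun t ht => ?_
      have : (0:ℝ) < t := ht
      simp only [norm_mul, norm_inv, norm_pow, Real.norm_eq_abs, abs_mul, abs_pow,
        abs_of_pos (by linarith : 0 < 1 + t)])
  have hI : ∫ t in Set.Ioi (0:ℝ), (⟪ψ, (resolventOp l t B * Q * resolventOp l t B) ψ⟫_ℂ).re
      = ∫ t in Set.Ioi (0:ℝ), ∑' m : ℕ, l ^ m * q m * ((1 + t) ^ (m + 2))⁻¹ :=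
    setIntegral_congr_fun measurableSet_Ioi fun t ht =>
      (hasSum_quadRe_resolvent hY Q ψ hl ht).tsum_eq.symm
  simp only [integral_const_mul, (integral_inv_pow _).2] at hint
  rw [hI, ← hint.tsum_eq, hint.summable.tsum_eq_zero_add]
  have hq0 : q 0 = (⟪ψ, Q ψ⟫_ℂ).re := by rw [← quadRe_apply]; simp [hq, powSum]
  rw [← hq0]
  simp only [pow_zero, one_mul, Nat.cast_zero, zero_add, inv_one, mul_one, mul_add]
  rw [sub_add_cancel_left, ← tsum_mul_left, ← tsum_neg]
  refine tsum_congr fun n => ?_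
  push_cast
  rw [pow_succ]
  have : (n:ℝ) + 2 ≠ 0 := by positivity
  have : (n:ℝ) + 1 + 1 ≠ 0 := by positivity
  field_simp
  ring

/-! ### Functional calculus along the segment from `B` to `A` -/

lemma spectrum_subset_Icc {C : H →L[ℂ] H} (h0 : 0 ≤ C) (h1 : C ≤ 1) :
    spectrum ℝ C ⊆ Set.Icc 0 1 := fun x hx =>
  ⟨spectrum_nonneg_of_nonneg h0 hx,
    (CFC.le_one_iff C (.of_nonneg h0)).1 h1 x hx⟩

lemma norm_two_smul_sub_one_le {C : H →L[ℂ] H} (h0 : 0 ≤ C) (h1 : C ≤ 1) :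
    ‖2 • C - 1‖ ≤ 1 := by
  have hsa : IsSelfAdjoint C := .of_nonneg h0
  have : 2 • C - 1 = cfc (fun x : ℝ => 2 * x - 1) C := by
    rw [cfc_sub _ _ C, cfc_const_mul_id 2 C, cfc_const_one ℝ C]
    module
  rw [this]
  refine norm_cfc_le zero_le_one fun x hx => ?_
  have := spectrum_subset_Icc h0 h1 hx
  exact abs_le.2 ⟨by linarith [this.1], by linarith [this.2]⟩

lemma summable_mul_quadRe_pow {e : ℕ → ℝ} (he : Summable fun n => |e n|) {Y : H →L[ℂ] H}
    (hY : ‖Y‖ ≤ 1) (ψ : H) : Summable fun n => e n * quadRe ψ (Y ^ (n + 2)) := by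
  refine Summable.of_norm_bounded (he.mul_right (‖ψ‖ ^ 2)) fun n => ?_
  rw [norm_mul, Real.norm_eq_abs, Real.norm_eq_abs]
  gcongr
  refine (abs_quadRe_le _ _).trans ?_
  exact mul_le_of_le_one_right (by positivity) (norm_pow_le_one' hY _)

/-- The partial sums are polynomials converging to `φ` uniformly on the spectrum. -/
lemma quadRe_cfc_eq_tsum {φ : ℝ → ℝ} {k a : ℝ} {e : ℕ → ℝ} (he : Summable fun n => |e n|)
    (hφ : ∀ x ∈ Set.Icc (0:ℝ) 1, φ x = k + a * x + ∑' n : ℕ, e n * (2*x - 1) ^ (n+2))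
    {C : H →L[ℂ] H} (h0 : 0 ≤ C) (h1 : C ≤ 1) (ψ : H) :
    quadRe ψ (cfc φ C) = k * quadRe ψ 1 + a * quadRe ψ C
      + ∑' n : ℕ, e n * quadRe ψ ((2 • C - 1) ^ (n+2)) := by
  have hsa : IsSelfAdjoint C := .of_nonneg h0
  have hsp := spectrum_subset_Icc h0 h1
  let P : ℕ → Polynomial ℝ := fun N => Polynomial.C k + Polynomial.C a * Polynomial.X
    + ∑ n ∈ Finset.range N, Polynomial.C (e n) * (2 * Polynomial.X - 1) ^ (n + 2)
  have hP : ∀ N x, (P N).eval x =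
      k + a * x + ∑ n ∈ Finset.range N, e n * (2*x - 1) ^ (n+2) := fun N x => by
    simp [P, Polynomial.eval_finsetSum]
  have hunif : TendstoUniformlyOn (fun N => (P N).eval) φ Filter.atTop (spectrum ℝ C) := by
    have h := tendstoUniformlyOn_tsum_nat (f := fun (n : ℕ) (x : ℝ) => e n * (2*x - 1) ^ (n+2))
      he (s := spectrum ℝ C) (fun n x hx => by
        rw [norm_mul, norm_pow, Real.norm_eq_abs, Real.norm_eq_abs]
        refine mul_le_of_le_one_right (abs_nonneg _) (pow_le_one₀ (abs_nonneg _) ?_)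
        exact abs_le.2 ⟨by linarith [(hsp hx).1], by linarith [(hsp hx).2]⟩)
    rw [Metric.tendstoUniformlyOn_iff] at h ⊢
    intro ε hε
    filter_upwards [h ε hε] with N hN x hx
    rw [hφ x (hsp hx), hP, dist_add_left]
    exact hN x hx
  have hlim := tendsto_cfc_fun hunif (.of_forall fun N => (P N).continuous.continuousOn)
  have hlim2 := ((quadRe ψ).continuous.tendsto _).comp hlim
  refine tendsto_nhds_unique hlim2 ?_
  have hsum := (summable_mul_quadRe_pow he (norm_two_smul_sub_one_le h0 h1) ψ).hasSum
  refine (hsum.tendsto_sum_nat.const_add (k * quadRe ψ 1 + a * quadRe ψ C)).congr fun N => ?_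
  have h2 : ((2 : Polynomial ℝ)) = Polynomial.C 2 := rfl
  rw [Function.comp_apply, cfc_polynomial (P N) C]
  simp only [P, map_add, map_sum, map_mul, map_pow, map_sub, map_one, Polynomial.aeval_C,
    Polynomial.aeval_X, map_ofNat, Algebra.algebraMap_eq_smul_one, smul_mul_assoc, one_mul,
    map_smul, smul_eq_mul]
  simp only [two_mul, two_smul]

lemma hasDerivWithinAt_quadRe_cfc {φ : ℝ → ℝ} {k a : ℝ} {c : ℕ → ℝ} (hc : Summable fun n => |c n|)
    (hφ : ∀ x ∈ Set.Icc (0:ℝ) 1,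
      φ x = k + a * x + ∑' n : ℕ, c n / (2 * (n+2)) * (2*x - 1) ^ (n+2))
    {A B : H →L[ℂ] H} (hA0 : 0 ≤ A) (hA1 : A ≤ 1) (hB0 : 0 ≤ B) (hB1 : B ≤ 1) (ψ : H) :
    HasDerivWithinAt (fun α : ℝ => quadRe ψ (cfc φ (B + α • (A - B))))
      (a * quadRe ψ (A - B)
        + ∑' n : ℕ, c n / ((n:ℝ) + 2) * quadRe ψ (powSum (2 • B - 1) (A - B) (n + 1)))
      (Set.Ici 0) 0 := by
  have hC : ∀ α ∈ Set.Icc (0:ℝ) 1, 0 ≤ B + α • (A - B) ∧ B + α • (A - B) ≤ 1 := by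
    intro α hα
    have e : B + α • (A - B) = (1 - α) • B + α • A := by module
    have hα1 : 0 ≤ 1 - α := by linarith [hα.2]
    rw [e]
    refine ⟨add_nonneg (smul_nonneg hα1 hB0) (smul_nonneg hα.1 hA0), ?_⟩
    calc (1 - α) • B + α • A ≤ (1 - α) • (1 : H →L[ℂ] H) + α • (1 : H →L[ℂ] H) := by
          gcongr
          exact hα.1
      _ = 1 := by module
  set Y : H →L[ℂ] H := 2 • B - 1 with hY
  set D : H →L[ℂ] H := 2 • (A - B) with hD
  have hline : ∀ α : ℝ, 2 • (B + α • (A - B)) - 1 = Y + α • D := fun α => by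
    rw [hY, hD]; module
  have hY1 : ∀ α ∈ Set.Icc (0:ℝ) 1, ‖Y + α • D‖ ≤ 1 := fun α hα => by
    rw [← hline]
    exact norm_two_smul_sub_one_le (hC α hα).1 (hC α hα).2
  have hY0 : ‖Y‖ ≤ 1 := norm_two_smul_sub_one_le hB0 hB1
  have he : Summable fun n : ℕ => |c n / (2 * ((n:ℝ) + 2))| := by
    refine hc.of_nonneg_of_le (fun n => abs_nonneg _) fun n => ?_
    rw [abs_div]
    refine div_le_self (abs_nonneg _) ?_
    rw [abs_of_pos (by positivity)]
    have : (0:ℝ) ≤ n := n.cast_nonneg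
    linarith
  have hseries := hasDerivWithinAt_tsum_of_lipschitz
    (g := fun n α => c n / (2 * ((n:ℝ) + 2)) * quadRe ψ ((Y + α • D) ^ (n + 2)))
    (g' := fun n => c n / ((n:ℝ) + 2) * quadRe ψ (powSum Y (A - B) (n + 1)))
    (u := fun n => |c n| * (‖ψ‖ ^ 2 * ‖D‖)) (hc.mul_right _)
    (fun n => by
      have h := (((quadRe ψ).hasFDerivAt.comp_hasDerivAt (0:ℝ)
        (hasDerivAt_pow_line Y D (n + 1))).const_mul (c n / (2 * ((n:ℝ) + 2)))).hasDerivWithinAt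
          (s := Set.Ici 0)
      refine h.congr_deriv ?_
      rw [hD, powSum_mul_left, map_nsmul]
      have : (n:ℝ) + 2 ≠ 0 := by positivity
      simp only [nsmul_eq_mul]
      push_cast
      field_simp)
    (fun α hα => summable_mul_quadRe_pow he (hY1 α hα) ψ)
    (fun n α hα => by
      have hn : (0:ℝ) < n + 2 := by positivity
      rw [zero_smul, add_zero, ← mul_sub, ← map_sub, abs_mul, abs_div,
        abs_of_pos (by positivity : (0:ℝ) < 2 * (n + 2))]
      have h1 : |quadRe ψ ((Y + α • D) ^ (n + 2) - Y ^ (n + 2))|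
          ≤ ‖ψ‖ ^ 2 * ((n + 2) * (α * ‖D‖)) := by
        refine (abs_quadRe_le _ _).trans ?_
        gcongr
        refine (norm_pow_sub_pow_le (hY1 α hα) hY0 _).trans (le_of_eq ?_)
        rw [add_sub_cancel_left, norm_smul, Real.norm_eq_abs, abs_of_nonneg hα.1]
        push_cast
        ring
      calc _ ≤ |c n| / (2 * (n + 2)) * (‖ψ‖ ^ 2 * ((n + 2) * (α * ‖D‖))) := by gcongr
        _ = |c n| * (‖ψ‖ ^ 2 * ‖D‖) * α / 2 := by field_simp
        _ ≤ _ := half_le_self (by have := hα.1; positivity))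
  have hlin : HasDerivWithinAt (fun α : ℝ => k * quadRe ψ 1 + a * quadRe ψ (B + α • (A - B)))
      (a * quadRe ψ (A - B)) (Set.Ici 0) 0 := by
    have h := (((((hasDerivAt_id (0:ℝ)).mul_const (quadRe ψ (A - B))).const_add
      (quadRe ψ B)).const_mul a).const_add (k * quadRe ψ 1)).hasDerivWithinAt (s := Set.Ici 0)
    simpa using h
  refine (hlin.add hseries).congr_of_eventuallyEq_of_mem ?_ Set.self_mem_Ici
  filter_upwards [Icc_mem_nhdsGE (zero_lt_one (α := ℝ))] with α hα
  rw [quadRe_cfc_eq_tsum he hφ (hC α hα).1 (hC α hα).2 ψ]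
  simp only [hline]
  rfl

/-! ### The Löwner representation as a power series -/

lemma integrableOn_loewner {μ : Measure ℝ} [IsProbabilityMeasure μ] {w : ℝ} (hw : |w| < 1) :
    IntegrableOn (fun l : ℝ => w / (1 - l * w)) (Set.Icc (-1) 1) μ := by
  refine Measure.integrableOn_of_bounded (M := 1 / (1 - |w|)) (measure_ne_top _ _)
    (by fun_prop : Measurable fun l : ℝ => w / (1 - l * w)).aestronglyMeasurable ?_
  filter_upwards [ae_restrict_mem measurableSet_Icc] with l hl
  have h1 : l * w ≤ |w| := (le_abs_self _).trans (by
    rw [abs_mul]; exact mul_le_of_le_one_left (abs_nonneg _) (abs_le.2 hl))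
  rw [norm_div, Real.norm_eq_abs, Real.norm_eq_abs, abs_of_pos (by linarith : 0 < 1 - l * w)]
  have : 0 < 1 - |w| := by linarith
  gcongr

/-- Since the integrand is nonnegative for `w > 0`, an endpoint atom alone bounds the Löwner
integral from below. The sign `s` treats both endpoints at once. -/
lemma atom_le_integral {μ : Measure ℝ} [IsProbabilityMeasure μ] {s w : ℝ} (hs : s = 1 ∨ s = -1)
    (hw0 : 0 < w) (hw1 : w < 1) :
    μ.real {s} * (w / (1 - w)) ≤ ∫ l in Set.Icc (-1:ℝ) 1, w / (1 - s * l * w) ∂μ := by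
  have hs2 : s * s = 1 := by rcases hs with rfl | rfl <;> norm_num
  have hsm : s ∈ Set.Icc (-1:ℝ) 1 := by rcases hs with rfl | rfl <;> norm_num
  have hint : IntegrableOn (fun l : ℝ => w / (1 - s * l * w)) (Set.Icc (-1) 1) μ := by
    rcases hs with rfl | rfl
    · simpa using integrableOn_loewner (μ := μ) (abs_lt.2 ⟨by linarith, hw1⟩)
    · simpa [neg_div] using
        (integrableOn_loewner (μ := μ) (w := -w) (abs_lt.2 ⟨by linarith, by linarith⟩)).neg
  have h : ∫ l in {s}, w / (1 - s * l * w) ∂μ ≤ ∫ l in Set.Icc (-1:ℝ) 1, w / (1 - s * l * w) ∂μ := by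
    refine setIntegral_mono_set hint ?_ (Set.singleton_subset_iff.2 hsm).eventuallyLE
    filter_upwards [ae_restrict_mem measurableSet_Icc] with l hl
    have h1 : s * l ≤ 1 := by rcases hs with rfl | rfl <;> linarith [hl.1, hl.2]
    have : s * l * w ≤ 1 * w := by gcongr
    exact div_nonneg hw0.le (by linarith)
  refine le_trans (le_of_eq ?_) h
  rw [integral_singleton, hs2, one_mul, smul_eq_mul]

/-- The Löwner measure has no atoms at `±1` unless `b = 0`; the case of `-1` follows by reflecting
`x ↦ 1 - x`. -/
lemma loewner_atoms_eq_zero {φ φ' : ℝ → ℝ} {a b : ℝ} {μ : Measure ℝ} [IsProbabilityMeasure μ]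
    (hφc : ContinuousOn φ (Set.Icc (0:ℝ) 1))
    (hφd : ∀ x ∈ Set.Ioo (0:ℝ) 1, HasDerivAt φ (φ' x) x) (hb : 0 ≤ b)
    (hrep : ∀ x ∈ Set.Ioo (0:ℝ) 1,
      φ' x = a + b * ∫ l in Set.Icc (-1:ℝ) 1, (2*x - 1) / (1 - l*(2*x - 1)) ∂μ) :
    b * μ.real {1} = 0 ∧ b * μ.real {-1} = 0 := by
  constructor
  · refine eq_zero_of_pole_le_deriv (a := a) hφc hφd (by positivity) fun x hx => ?_
    rw [hrep x ⟨by linarith [hx.1], hx.2⟩, mul_assoc]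
    have h := atom_le_integral (μ := μ) (s := 1) (w := 2 * x - 1) (.inl rfl)
      (by linarith [hx.1]) (by linarith [hx.2])
    rw [show 1 - (2 * x - 1) = 2 - 2 * x by ring] at h
    simp only [one_mul] at h
    gcongr
  · refine eq_zero_of_pole_le_deriv (a := -a) (f := fun x => φ (1 - x)) (f' := fun x => -φ' (1 - x))
      (hφc.comp (by fun_prop) fun x hx => ⟨by linarith [hx.2], by linarith [hx.1]⟩)
      (fun x hx => ?_) (by positivity) fun x hx => ?_
    · have h := (hφd (1 - x) ⟨by linarith [hx.2], by linarith [hx.1]⟩).comp x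
        ((hasDerivAt_id x).const_sub 1)
      exact h.congr_deriv (by simp)
    · rw [hrep (1 - x) ⟨by linarith [hx.2], by linarith [hx.1]⟩, mul_assoc]
      have h := atom_le_integral (μ := μ) (s := -1) (w := 2 * x - 1) (.inr rfl)
        (by linarith [hx.1]) (by linarith [hx.2])
      rw [show 1 - (2 * x - 1) = 2 - 2 * x by ring] at h
      have e : ∫ l in Set.Icc (-1:ℝ) 1, (2 * (1 - x) - 1) / (1 - l * (2 * (1 - x) - 1)) ∂μ
          = -∫ l in Set.Icc (-1:ℝ) 1, (2 * x - 1) / (1 - -1 * l * (2 * x - 1)) ∂μ := by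
        rw [← integral_neg]
        congr 1 with l
        rw [← neg_div]
        congr 1 <;> ring
      rw [e]
      have := mul_le_mul_of_nonneg_left h hb
      linarith

/-- Moment expansion of the Löwner representation; only the open interval contributes. -/
lemma loewner_eq_tsum {φ φ' : ℝ → ℝ} {a b : ℝ} {μ : Measure ℝ} [IsProbabilityMeasure μ]
    (hφc : ContinuousOn φ (Set.Icc (0:ℝ) 1))
    (hφd : ∀ x ∈ Set.Ioo (0:ℝ) 1, HasDerivAt φ (φ' x) x) (hb : 0 ≤ b)
    (hrep : ∀ x ∈ Set.Ioo (0:ℝ) 1,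
      φ' x = a + b * ∫ l in Set.Icc (-1:ℝ) 1, (2*x - 1) / (1 - l*(2*x - 1)) ∂μ)
    (hw : IntegrableOn (fun l : ℝ => 1 / (1 - |l|)) (Set.Ioo (-1:ℝ) 1) μ) :
    ∀ x ∈ Set.Ioo (0:ℝ) 1, φ' x =
      a + ∑' n : ℕ, (b * ∫ l in Set.Ioo (-1:ℝ) 1, l ^ n ∂μ) * (2*x - 1) ^ (n+1) := by
  intro x hx
  have hy : |2 * x - 1| < 1 := abs_lt.2 ⟨by linarith [hx.1], by linarith [hx.2]⟩
  rw [hrep x hx]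
  set y := 2 * x - 1
  have h1 : b * ∫ l in Set.Icc (-1:ℝ) 1, y / (1 - l * y) ∂μ
      = b * ∫ l in Set.Ioo (-1:ℝ) 1, y / (1 - l * y) ∂μ := by
    rcases eq_or_ne b 0 with rfl | hb0
    · simp
    · obtain ⟨p1, p2⟩ := loewner_atoms_eq_zero hφc hφd hb hrep
      have p1' := (measureReal_eq_zero_iff).1 ((mul_eq_zero.1 p1).resolve_left hb0)
      have p2' := (measureReal_eq_zero_iff).1 ((mul_eq_zero.1 p2).resolve_left hb0)
      rw [setIntegral_congr_set (Ioo_ae_eq_Icc' p2' p1').symm]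
  have h2 := (integrable_tsum_pow hw (d := fun n => y ^ (n + 1)) (K := 1) fun n => by
    rw [abs_pow]; exact pow_le_one₀ (abs_nonneg _) hy.le).2
  have h3 : ∫ l in Set.Ioo (-1:ℝ) 1, y / (1 - l * y) ∂μ
      = ∫ l in Set.Ioo (-1:ℝ) 1, ∑' n : ℕ, l ^ n * y ^ (n + 1) ∂μ := by
    refine setIntegral_congr_fun measurableSet_Ioo fun l hl => ?_
    have hly : ‖l * y‖ < 1 := by
      rw [norm_mul, Real.norm_eq_abs, Real.norm_eq_abs]
      exact mul_lt_one_of_nonneg_of_lt_one_left (abs_nonneg _) (abs_lt.2 hl) hy.le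
    have := ((hasSum_geometric_of_norm_lt_one hly).mul_left y).tsum_eq
    rw [div_eq_mul_inv, ← this]
    exact tsum_congr fun n => by ring
  rw [h1, h3, ← h2.tsum_eq, ← tsum_mul_left]
  simp only [mul_assoc]

/-- (Lemma 3 of Deuchert–Hainzl–Seiringer, regular case.) For bounded selfadjoint
`0 ≤ A, B ≤ 1`, `φ` continuous on `[0,1]` and differentiable on `(0,1)` with derivative `φ'`
admitting a Löwner representation, and `∫ 1/(1−|λ|) dμ(λ) < ∞`, the function `F` is
`μ`-integrable on `(−1,1)` and `α ↦ ⟨ψ, φ(B + α(A−B))ψ⟩` has right derivative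
`a⟨ψ,Qψ⟩ − (b/2)∫ F dμ` at `α = 0`. -/
theorem hasRightDeriv_inner_cfc
    (A B : H →L[ℂ] H) (hA : IsSelfAdjoint A) (hB : IsSelfAdjoint B)
    (hA0 : 0 ≤ A) (hA1 : A ≤ 1) (hB0 : 0 ≤ B) (hB1 : B ≤ 1)
    (φ φ' : ℝ → ℝ) (a b : ℝ) (μ : Measure ℝ) [IsProbabilityMeasure μ]
    (hφc : ContinuousOn φ (Set.Icc (0:ℝ) 1))
    (hφd : ∀ x ∈ Set.Ioo (0:ℝ) 1, HasDerivAt φ (φ' x) x)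
    (hb : 0 ≤ b)
    (hμsupp : μ (Set.Icc (-1:ℝ) 1)ᶜ = 0)
    (hrep : ∀ x ∈ Set.Ioo (0:ℝ) 1,
      φ' x = a + b * ∫ l in Set.Icc (-1:ℝ) 1, (2*x - 1) / (1 - l*(2*x - 1)) ∂μ)
    (hμint : (∫⁻ l in Set.Icc (-1:ℝ) 1, ENNReal.ofReal (1 / (1 - |l|)) ∂μ) ≠ ⊤)
    (ψ : H) :
    IntegrableOn (derivIntegrand B (A - B) ψ) (Set.Ioo (-1:ℝ) 1) μ ∧
    HasDerivWithinAt (fun α : ℝ => (⟪ψ, (cfc φ (B + (α:ℂ) • (A - B))) ψ⟫_ℂ).re)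
      (a * (⟪ψ, (A - B) ψ⟫_ℂ).re
        - (b/2) * ∫ l in Set.Ioo (-1:ℝ) 1, derivIntegrand B (A - B) ψ l ∂μ)
      (Set.Ici (0:ℝ)) 0 := by
  have hw := integrable_weight hμint
  have hY : ‖2 • B - 1‖ ≤ 1 := norm_two_smul_sub_one_le hB0 hB1
  set Q := A - B with hQ
  set d : ℕ → ℝ := fun n => -2 / ((n:ℝ) + 2) * quadRe ψ (powSum (2 • B - 1) Q (n + 1)) with hd
  have hdK : ∀ n, |d n| ≤ 2 * (‖ψ‖ ^ 2 * ‖Q‖) := fun n => by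
    have hn : (0:ℝ) < n + 2 := by positivity
    have h1 : |quadRe ψ (powSum (2 • B - 1) Q (n + 1))| ≤ ‖ψ‖ ^ 2 * ((n + 2) * ‖Q‖) := by
      refine (abs_quadRe_le _ _).trans ?_
      gcongr
      refine (norm_powSum_le hY _).trans (le_of_eq ?_)
      push_cast
      ring
    rw [hd, abs_mul, abs_div, abs_neg, abs_two, abs_of_pos hn]
    calc _ ≤ 2 / ((n:ℝ) + 2) * (‖ψ‖ ^ 2 * ((n + 2) * ‖Q‖)) := by gcongr
      _ = _ := by field_simp
  obtain ⟨hFint, hFsum⟩ := integrable_tsum_pow hw hdK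
  have hF : Set.EqOn (derivIntegrand B Q ψ) (fun l => ∑' n, l ^ n * d n) (Set.Ioo (-1) 1) :=
    fun l hl => derivIntegrand_eq_tsum hY Q ψ (abs_lt.2 hl)
  refine ⟨hFint.congr_fun hF.symm measurableSet_Ioo, ?_⟩
  set c : ℕ → ℝ := fun n => b * ∫ l in Set.Ioo (-1:ℝ) 1, l ^ n ∂μ with hc
  have hcs : Summable fun n => |c n| := by
    refine ((summable_abs_moment hw).mul_left |b|).of_nonneg_of_le (fun n => abs_nonneg _)
      fun n => ?_
    rw [hc, abs_mul]
    gcongr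
    exact norm_integral_le_integral_norm (fun l : ℝ => l ^ n)
  obtain ⟨k, hk⟩ := exists_eq_powerSeries hφc hφd hcs (loewner_eq_tsum hφc hφd hb hrep hw)
  have h := hasDerivWithinAt_quadRe_cfc hcs hk hA0 hA1 hB0 hB1 ψ
  simp only [quadRe_apply ψ (cfc _ _)] at h
  simp only [Complex.coe_smul]
  refine h.congr_deriv ?_
  rw [quadRe_apply, setIntegral_congr_fun measurableSet_Ioo hF, ← hFsum.tsum_eq,
    sub_eq_add_neg (a * _), ← neg_mul, ← tsum_mul_left]
  congr 1
  refine tsum_congr fun n => ?_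
  rw [hc, hd]
  ring
end

section
/- Let h be a complex Hilbert space and let A, B be bounded selfadjoint operators on h with 0 ≤ A ≤ 1 and 0 ≤ B ≤ 1. Let ψ ∈ h satisfy Bψ = 0 and Aψ ≠ 0. Let φ: [0,1] → ℝ be continuous and differentiable on (0,1), and assume the Löwner representation hypothesis: a ∈ ℝ, b > 0, and μ is a Borel probability measure on [−1,1] such that φ'(x) = a + b ∫_{[−1,1]} (2x−1)/(1−λ(2x−1)) dμ(λ) for every x ∈ (0,1). Assume ∫_{[1/2,1]} (−ln(1−λ)) dμ(λ) < ∞ and ∫_{[−1,−1/2]} 1/(1+λ) dμ(λ) = +∞. Then lim_{α→0⁺} (1/α)⟨ψ, (φ(B + α(A−B)) − φ(B))ψ⟩ = −∞, where φ is applied via the continuous functional calculus. -/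
/-!
Since `Bψ = 0`, the operator `C = B + α(A - B)` satisfies `Cψ = αAψ`. Hence the spectral measure
of `C` at `ψ` has first moment `α⟨ψ, Aψ⟩` but second moment only `α²‖Aψ‖²`. The divergence of
`∫ 1/(1+λ) dμ` forces `φ'(x) → -∞` as `x → 0⁺` (Fatou's lemma, `tendsto_lintegral_kernel`), so the
mean value theorem and boundedness of `φ` give, for every `M`, a constant `K` with
`φ(x) ≤ φ(0) - M x + K x²` on `[0,1]`. Monotonicity of the functional calculus turns this into
`⟨ψ, φ(C)ψ⟩ ≤ φ(0)‖ψ‖² - M α ⟨ψ, Aψ⟩ + K α² ‖Aψ‖²` (`re_inner_cfc_le`). As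
`⟨ψ, φ(B)ψ⟩ ≥ φ(0)‖ψ‖²`, the difference quotient is at most `-M⟨ψ, Aψ⟩ + K α ‖Aψ‖²`, where
`⟨ψ, Aψ⟩ ≥ ‖Aψ‖² > 0` because `A² ≤ A`; and `M` is arbitrary.
-/

open MeasureTheory Filter
open scoped InnerProductSpace ENNReal Topology

/-- A linear upper bound near `0` extends to all of `[0,1]` at the price of a quadratic term. -/
lemma exists_quadratic_bound {f : ℝ → ℝ} (hf : ContinuousOn f (Set.Icc (0:ℝ) 1))
    {δ c s : ℝ} (hδ : 0 < δ) (h : ∀ x ∈ Set.Icc (0:ℝ) 1, x < δ → f x ≤ c + s * x) :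
    ∃ K : ℝ, ∀ x ∈ Set.Icc (0:ℝ) 1, f x ≤ c + s * x + K * x ^ 2 := by
  have hg : ContinuousOn (fun x => f x - c - s * x) (Set.Icc (0:ℝ) 1) := by fun_prop
  obtain ⟨N, hN⟩ := isCompact_Icc.bddAbove_image hg
  refine ⟨|N| / δ ^ 2, fun x hx => ?_⟩
  rcases lt_or_ge x δ with hxδ | hxδ
  · have := h x hx hxδ
    have : 0 ≤ |N| / δ ^ 2 * x ^ 2 := by positivity
    linarith
  · have h1 : f x - c - s * x ≤ N := hN ⟨x, hx, rfl⟩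
    have h2 : |N| ≤ |N| / δ ^ 2 * x ^ 2 := by
      rw [div_mul_eq_mul_div, le_div_iff₀ (by positivity)]
      gcongr
    linarith [le_abs_self N]

lemma re_inner_mono {H : Type*} [NormedAddCommGroup H] [InnerProductSpace ℂ H]
    {S T : H →L[ℂ] H} (h : S ≤ T) (ψ : H) :
    (⟪ψ, S ψ⟫_ℂ).re ≤ (⟪ψ, T ψ⟫_ℂ).re := by
  have := ((ContinuousLinearMap.le_def S T).1 h).re_inner_nonneg_right ψ
  simpa [inner_sub_right] using this

section Operators

variable {H : Type*} [NormedAddCommGroup H] [InnerProductSpace ℂ H] [CompleteSpace H]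

lemma spectrum_subset_Icc_s10 {C : H →L[ℂ] H} (hC0 : 0 ≤ C) (hC1 : C ≤ 1) :
    ∀ x ∈ spectrum ℝ C, x ∈ Set.Icc (0:ℝ) 1 := by
  intro x hx
  refine ⟨spectrum_nonneg_of_nonneg hC0 hx, ?_⟩
  have hC : IsSelfAdjoint C := IsSelfAdjoint.of_nonneg hC0
  exact (le_algebraMap_iff_spectrum_le (r := (1:ℝ)) hC).1 (by simpa using hC1) x hx

lemma re_inner_sq {C : H →L[ℂ] H} (hC : IsSelfAdjoint C) (ψ : H) :
    (⟪ψ, (C ^ 2) ψ⟫_ℂ).re = ‖C ψ‖ ^ 2 := by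
  have h : ⟪ψ, C (C ψ)⟫_ℂ = ⟪C ψ, C ψ⟫_ℂ := (hC.isSymmetric ψ (C ψ)).symm
  rw [pow_two, mul_apply_eq_comp, h, inner_self_eq_norm_sq_to_K]
  norm_cast

/-- A quadratic scalar bound on `[0,1]` controls the quadratic form of `f(C)` by the zeroth, first
and second moments of the spectral measure of `C`. -/
lemma re_inner_cfc_le {C : H →L[ℂ] H} (hC0 : 0 ≤ C) (hC1 : C ≤ 1) {f : ℝ → ℝ}
    (hf : ContinuousOn f (Set.Icc (0:ℝ) 1)) {c s K : ℝ}
    (h : ∀ x ∈ Set.Icc (0:ℝ) 1, f x ≤ c + s * x + K * x ^ 2) (ψ : H) :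
    (⟪ψ, cfc f C ψ⟫_ℂ).re ≤
      c * ‖ψ‖ ^ 2 + s * (⟪ψ, C ψ⟫_ℂ).re + K * ‖C ψ‖ ^ 2 := by
  have hC : IsSelfAdjoint C := IsSelfAdjoint.of_nonneg hC0
  have hsp := spectrum_subset_Icc_s10 hC0 hC1
  have hle : cfc f C ≤ cfc (fun x : ℝ => c + s * x + K * x ^ 2) C :=
    cfc_mono (fun x hx => h x (hsp x hx)) (hf.mono hsp) (by fun_prop)
  have heq : cfc (fun x : ℝ => c + s * x + K * x ^ 2) C
      = algebraMap ℝ (H →L[ℂ] H) c + s • C + K • C ^ 2 := by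
    rw [cfc_add C (fun x : ℝ => c + s * x) (fun x : ℝ => K * x ^ 2) (by fun_prop) (by fun_prop),
      cfc_add C (fun _ : ℝ => c) (fun x : ℝ => s * x) (by fun_prop) (by fun_prop),
      cfc_const c C, cfc_const_mul_id s C, cfc_const_mul K (fun x : ℝ => x ^ 2) C (by fun_prop),
      cfc_pow_id C 2]
  rw [heq] at hle
  refine (re_inner_mono hle ψ).trans (le_of_eq ?_)
  have h1 : (⟪ψ, ψ⟫_ℂ).re = ‖ψ‖ ^ 2 := by
    rw [inner_self_eq_norm_sq_to_K]; norm_cast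
  have h0 : (algebraMap ℝ (H →L[ℂ] H) c) ψ = (c:ℂ) • ψ := by
    rw [Algebra.algebraMap_eq_smul_one]; simp
  have hs : ∀ (r : ℝ) (v : H), r • v = (r:ℂ) • v := fun r v => (Complex.coe_smul r v).symm
  rw [_root_.add_apply, _root_.add_apply, h0,
    _root_.smul_apply, _root_.smul_apply, hs, hs,
    inner_add_right, inner_add_right, inner_smul_right, inner_smul_right, inner_smul_right,
    Complex.add_re, Complex.add_re, Complex.re_ofReal_mul, Complex.re_ofReal_mul,
    Complex.re_ofReal_mul, h1, re_inner_sq hC]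

/-- On the kernel of `B`, the quadratic form of `φ(B)` is at least `φ(0)‖ψ‖²`. -/
lemma le_re_inner_cfc_of_kernel {B : H →L[ℂ] H} (hB0 : 0 ≤ B) (hB1 : B ≤ 1) {φ : ℝ → ℝ}
    (hφ : ContinuousOn φ (Set.Icc (0:ℝ) 1)) {ψ : H} (hψ : B ψ = 0) :
    φ 0 * ‖ψ‖ ^ 2 ≤ (⟪ψ, cfc φ B ψ⟫_ℂ).re := by
  have key : ∀ ε : ℝ, 0 < ε → (φ 0 - ε) * ‖ψ‖ ^ 2 ≤ (⟪ψ, cfc φ B ψ⟫_ℂ).re := by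
    intro ε hε
    obtain ⟨δ, hδ, hδ'⟩ := Metric.continuousOn_iff.1 hφ 0 (by simp) ε hε
    have hneg : ContinuousOn (fun x => -φ x) (Set.Icc (0:ℝ) 1) := hφ.neg
    obtain ⟨K, hK⟩ := exists_quadratic_bound (c := -φ 0 + ε) (s := 0) hneg hδ (by
      intro x hx hxδ
      have := hδ' x hx (by rw [Real.dist_eq, sub_zero, abs_of_nonneg hx.1]; exact hxδ)
      rw [Real.dist_eq] at this
      linarith [(abs_lt.1 this).1])
    have := re_inner_cfc_le hB0 hB1 hneg hK ψ
    rw [cfc_neg, _root_.neg_apply, inner_neg_right, Complex.neg_re, hψ] at this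
    simp at this
    linarith
  have hlim : Tendsto (fun ε : ℝ => (φ 0 - ε) * ‖ψ‖ ^ 2) (𝓝[>] 0) (𝓝 (φ 0 * ‖ψ‖ ^ 2)) := by
    have : Continuous (fun ε : ℝ => (φ 0 - ε) * ‖ψ‖ ^ 2) := by fun_prop
    simpa using (this.tendsto 0).mono_left nhdsWithin_le_nhds
  exact le_of_tendsto hlim (by filter_upwards [self_mem_nhdsWithin] with ε hε using key ε hε)

lemma re_inner_pos {A : H →L[ℂ] H} (hA0 : 0 ≤ A) (hA1 : A ≤ 1) {ψ : H} (hψ : A ψ ≠ 0) :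
    0 < (⟪ψ, A ψ⟫_ℂ).re := by
  -- The scalar inequality `-x ≤ -x²` on `[0,1]` yields `⟨ψ, Aψ⟩ ≥ ‖Aψ‖²`.
  have h := re_inner_cfc_le (f := fun x => -x) (c := 0) (s := 0) (K := -1) hA0 hA1 (by fun_prop)
    (by rintro x ⟨h0, h1⟩; nlinarith) ψ
  have hA : IsSelfAdjoint A := IsSelfAdjoint.of_nonneg hA0
  rw [cfc_neg, cfc_id' ℝ A, _root_.neg_apply, inner_neg_right, Complex.neg_re] at h
  have : 0 < ‖A ψ‖ ^ 2 := by positivity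
  linarith

end Operators

/-- Fatou's lemma transfers the divergence of `∫ 1/(1+λ)` to the Löwner kernels as `x → 0⁺`. -/
lemma tendsto_lintegral_kernel {μ : Measure ℝ}
    (hinv : (∫⁻ l in Set.Icc (-1:ℝ) (-1/2), ENNReal.ofReal (1 / (1 + l)) ∂μ) = ⊤) :
    Tendsto (fun x : ℝ => ∫⁻ l in Set.Icc (-1:ℝ) (-1/2),
      ENNReal.ofReal ((1 - 2 * x) / (1 + l * (1 - 2 * x))) ∂μ) (𝓝[>] 0) (𝓝 ⊤) := by
  refine tendsto_of_le_liminf_of_limsup_le ?_ le_top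
  rw [← hinv]
  refine le_trans (lintegral_mono fun l => ?_) (lintegral_liminf_le fun x => by fun_prop)
  rcases eq_or_ne (1 + l) 0 with hl | hl
  · -- At `l = -1` the left side is `1 / 0 = 0`.
    simp [hl]
  · refine le_of_eq (Tendsto.liminf_eq ?_).symm
    refine ENNReal.tendsto_ofReal (Tendsto.mono_left ?_ nhdsWithin_le_nhds)
    have : ContinuousAt (fun x : ℝ => (1 - 2 * x) / (1 + l * (1 - 2 * x))) 0 := by
      refine ContinuousAt.div (by fun_prop) (by fun_prop) (by simpa using hl)
    simpa [ContinuousAt] using this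

/-- A lower bound for the part of the Löwner integral near `λ = -1` bounds the full integral, whose
integrand has constant sign for `x < 1/2`. -/
lemma kernel_integral_le {μ : Measure ℝ} [IsProbabilityMeasure μ] {x R : ℝ} (hx0 : 0 < x)
    (hx : x < 1 / 2)
    (h : ENNReal.ofReal R < ∫⁻ l in Set.Icc (-1:ℝ) (-1/2),
      ENNReal.ofReal ((1 - 2 * x) / (1 + l * (1 - 2 * x))) ∂μ) :
    ∫ l in Set.Icc (-1:ℝ) 1, (2*x - 1) / (1 - l*(2*x - 1)) ∂μ ≤ -R := by
  set g : ℝ → ℝ := fun l => (1 - 2 * x) / (1 + l * (1 - 2 * x)) with hg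
  have hden : ∀ l ∈ Set.Icc (-1:ℝ) 1, 2 * x ≤ 1 + l * (1 - 2 * x) := by
    rintro l ⟨h1, h2⟩; nlinarith
  have hnn : ∀ l ∈ Set.Icc (-1:ℝ) 1, 0 ≤ g l := fun l hl =>
    div_nonneg (by linarith) (by linarith [hden l hl])
  have hae : ∀ᵐ l ∂(μ.restrict (Set.Icc (-1:ℝ) 1)), 0 ≤ g l := by
    filter_upwards [ae_restrict_mem measurableSet_Icc] with l hl using hnn l hl
  have hint : Integrable g (μ.restrict (Set.Icc (-1:ℝ) 1)) := by
    refine Integrable.of_bound (by fun_prop : Measurable g).aestronglyMeasurable (1 / (2 * x)) ?_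
    filter_upwards [ae_restrict_mem measurableSet_Icc] with l hl
    rw [Real.norm_of_nonneg (hnn l hl)]
    exact div_le_div₀ zero_le_one (by linarith) (by linarith) (hden l hl)
  have heq : ∫ l in Set.Icc (-1:ℝ) 1, (2*x - 1) / (1 - l*(2*x - 1)) ∂μ
      = -∫ l in Set.Icc (-1:ℝ) 1, g l ∂μ := by
    rw [← integral_neg]
    congr 1; ext l
    simp only [hg]
    rw [← neg_div]; congr 1 <;> ring
  rw [heq, neg_le_neg_iff]
  have h2 : ENNReal.ofReal R ≤ ENNReal.ofReal (∫ l in Set.Icc (-1:ℝ) 1, g l ∂μ) := by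
    rw [ofReal_integral_eq_lintegral_ofReal hint hae]
    exact h.le.trans (lintegral_mono_set (Set.Icc_subset_Icc le_rfl (by norm_num)))
  exact (ENNReal.ofReal_le_ofReal_iff (integral_nonneg_of_ae hae)).1 h2

/-- (Lemma 3 of Deuchert–Hainzl–Seiringer, singular case.) Let `0 ≤ A, B ≤ 1` be bounded
selfadjoint operators, `ψ` with `Bψ = 0` and `Aψ ≠ 0`, and `φ` continuous on `[0,1]`,
differentiable on `(0,1)`, whose derivative admits a Löwner representation with `b > 0`.
If `∫_{[1/2,1]} (−ln(1−λ)) dμ < ∞` and `∫_{[−1,−1/2]} 1/(1+λ) dμ = +∞`, then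
`lim_{α→0⁺} (1/α)⟨ψ, (φ(B + α(A−B)) − φ(B))ψ⟩ = −∞`. -/
theorem tendsto_atBot_inner_cfc_of_kernel
    {H : Type*} [NormedAddCommGroup H] [InnerProductSpace ℂ H] [CompleteSpace H]
    (A B : H →L[ℂ] H) (hA : IsSelfAdjoint A) (hB : IsSelfAdjoint B)
    (hA0 : 0 ≤ A) (hA1 : A ≤ 1) (hB0 : 0 ≤ B) (hB1 : B ≤ 1)
    (ψ : H) (hψB : B ψ = 0) (hψA : A ψ ≠ 0)
    (φ φ' : ℝ → ℝ) (a b : ℝ) (μ : Measure ℝ) [IsProbabilityMeasure μ]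
    (hφc : ContinuousOn φ (Set.Icc (0:ℝ) 1))
    (hφd : ∀ x ∈ Set.Ioo (0:ℝ) 1, HasDerivAt φ (φ' x) x)
    (hb : 0 < b)
    (hμsupp : μ (Set.Icc (-1:ℝ) 1)ᶜ = 0)
    (hrep : ∀ x ∈ Set.Ioo (0:ℝ) 1,
      φ' x = a + b * ∫ l in Set.Icc (-1:ℝ) 1, (2*x - 1) / (1 - l*(2*x - 1)) ∂μ)
    (hlog : (∫⁻ l in Set.Icc (1/2:ℝ) 1, ENNReal.ofReal (-Real.log (1 - l)) ∂μ) < ⊤)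
    (hinv : (∫⁻ l in Set.Icc (-1:ℝ) (-1/2), ENNReal.ofReal (1 / (1 + l)) ∂μ) = ⊤) :
    Tendsto (fun α : ℝ =>
        (1/α) * (⟪ψ, ((cfc φ (B + (α:ℂ) • (A - B)) - cfc φ B)) ψ⟫_ℂ).re)
      (𝓝[>] (0:ℝ)) atBot := by
  have hq : 0 < (⟪ψ, A ψ⟫_ℂ).re := re_inner_pos hA0 hA1 hψA
  set q := (⟪ψ, A ψ⟫_ℂ).re with hqdef
  rw [tendsto_atBot]
  intro y
  -- `M` is chosen so that `-M * q ≤ y - 1`, leaving room `1` for the quadratic term.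
  set M : ℝ := |y - 1| / q with hM
  have hMq : -M * q ≤ y - 1 := by
    rw [hM, neg_mul, div_mul_cancel₀ _ hq.ne']
    linarith [neg_abs_le (y - 1)]
  set R : ℝ := |a + M| / b with hRdef
  have hev : ∀ᶠ x in 𝓝[>] (0:ℝ), φ' x ≤ -M := by
    filter_upwards [(tendsto_lintegral_kernel hinv).eventually
        (lt_mem_nhds (ENNReal.ofReal_lt_top (r := R))),
      Ioo_mem_nhdsGT (show (0:ℝ) < 1 / 2 by norm_num)] with x hx hx2
    rw [hrep x ⟨hx2.1, by linarith [hx2.2]⟩]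
    have h1 := kernel_integral_le hx2.1 hx2.2 hx
    have h2 : b * ∫ l in Set.Icc (-1:ℝ) 1, (2*x - 1) / (1 - l*(2*x - 1)) ∂μ ≤ b * -R := by
      gcongr
    have h3 : b * R = |a + M| := by rw [hRdef]; field_simp
    linarith [le_abs_self (a + M)]
  obtain ⟨δ, hδ, hδ'⟩ := mem_nhdsGT_iff_exists_Ioo_subset.1 hev
  have hlin : ∀ x ∈ Set.Icc (0:ℝ) 1, x < δ → φ x ≤ φ 0 + (-M) * x := by
    intro x hx hxδ
    have hint : ∀ t ∈ interior (Set.Icc (0:ℝ) x), t ∈ Set.Ioo (0:ℝ) 1 ∧ t < δ := by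
      intro t ht
      rw [interior_Icc] at ht
      exact ⟨⟨ht.1, ht.2.trans_le hx.2⟩, ht.2.trans hxδ⟩
    have := (convex_Icc (0:ℝ) x).image_sub_le_mul_sub_of_deriv_le (f := φ) (C := -M)
      (hφc.mono (Set.Icc_subset_Icc le_rfl hx.2))
      (fun t ht => (hφd t (hint t ht).1).differentiableAt.differentiableWithinAt)
      (fun t ht => by
        rw [(hφd t (hint t ht).1).deriv]
        exact hδ' ⟨(hint t ht).1.1, (hint t ht).2⟩)
      0 (Set.left_mem_Icc.2 hx.1) x (Set.right_mem_Icc.2 hx.1) hx.1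
    linarith
  obtain ⟨K, hK⟩ := exists_quadratic_bound hφc hδ hlin
  have hsmall : ∀ᶠ α in 𝓝[>] (0:ℝ), K * α * ‖A ψ‖ ^ 2 ≤ 1 := by
    have hc : Continuous (fun α : ℝ => K * α * ‖A ψ‖ ^ 2) := by fun_prop
    have : Tendsto (fun α : ℝ => K * α * ‖A ψ‖ ^ 2) (𝓝[>] 0) (𝓝 0) := by
      simpa using (hc.tendsto 0).mono_left nhdsWithin_le_nhds
    exact (this.eventually (gt_mem_nhds zero_lt_one)).mono fun _ h => h.le
  filter_upwards [hsmall, Ioo_mem_nhdsGT (zero_lt_one (α := ℝ))] with α hα hα01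
  obtain ⟨hα0, hα1⟩ := hα01
  set C : H →L[ℂ] H := B + (α:ℂ) • (A - B) with hC
  have hCeq : C = (1 - α) • B + α • A := by
    ext v
    simp [hC, smul_sub, sub_smul]
    abel
  have hC0 : 0 ≤ C := by
    rw [hCeq]
    exact add_nonneg (smul_nonneg (by linarith) hB0) (smul_nonneg hα0.le hA0)
  have hC1 : C ≤ 1 := by
    rw [hCeq]
    calc (1 - α) • B + α • A ≤ (1 - α) • (1 : H →L[ℂ] H) + α • (1 : H →L[ℂ] H) :=
          add_le_add (smul_le_smul_of_nonneg_left hB1 (by linarith))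
            (smul_le_smul_of_nonneg_left hA1 hα0.le)
      _ = 1 := by rw [← add_smul]; simp
  have hCψ : C ψ = (α:ℂ) • A ψ := by simp [hC, hψB]
  have hup := re_inner_cfc_le hC0 hC1 hφc hK ψ
  have hlow := le_re_inner_cfc_of_kernel hB0 hB1 hφc hψB
  rw [hCψ, inner_smul_right, Complex.re_ofReal_mul, norm_smul, Complex.norm_real,
    Real.norm_of_nonneg hα0.le, ← hqdef] at hup
  rw [_root_.sub_apply, inner_sub_right, Complex.sub_re, one_div,
    inv_mul_le_iff₀ hα0]
  calc (⟪ψ, cfc φ C ψ⟫_ℂ).re - (⟪ψ, cfc φ B ψ⟫_ℂ).re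
      ≤ α * (-M * q + K * α * ‖A ψ‖ ^ 2) := by linarith
    _ ≤ α * y := by gcongr; linarith
end

section
/- Let h be a complex Hilbert space, c > 0, and let S, T be bounded selfadjoint operators on h with S ≥ c·1 and T ≥ c·1. Then for every ψ ∈ h: ⟨ψ, (ln T − ln S)ψ⟩ = ∫_0^∞ ⟨ψ, (S+t)⁻¹ (T−S) (T+t)⁻¹ ψ⟩ dt, where ln S and ln T are defined via the continuous functional calculus (the spectra of S and T lie in [c, ∞)), and (S+t)⁻¹, (T+t)⁻¹ denote the inverses of S+t·1 and T+t·1, which exist for all t ≥ 0. -/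
/-!
For `x > 0` one has `log x = ∫ t in (0, ∞), ((1 + t)⁻¹ - (x + t)⁻¹)`, where the integrand is
`O((t + m)⁻²)` uniformly for `x` in a compact subset of `[m, ∞)`, `0 < m ≤ 1`. The continuous
functional calculus therefore commutes with this integral (`cfc_setIntegral`), which represents
`log S` as the norm-convergent integral of `(1 + t)⁻¹ • 1 - (S + t)⁻¹`
(`cfc_log_eq_integral_resolvent`). In the difference `log T - log S` the scalar terms cancel, and the
resolvent identity `(S + t)⁻¹ - (T + t)⁻¹ = (S + t)⁻¹ (T - S) (T + t)⁻¹` gives an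
operator-valued integral formula; the weak form follows since bounded linear maps commute with
Bochner integrals.
-/

open MeasureTheory
open scoped InnerProductSpace

/-- A uniform integrable bound for the integrand representing the logarithm. -/
lemma abs_logIntegrand_le {m x t : ℝ} (hm : 0 < m) (hm1 : m ≤ 1) (hx : m ≤ x) (ht : 0 < t) :
    |(1 + t)⁻¹ - (x + t)⁻¹| ≤ (|x| + 1) * (t + m) ^ (-2 : ℝ) := by
  have h1 : 0 < 1 + t := by linarith
  have h2 : 0 < x + t := by linarith
  have h3 : 0 < t + m := by linarith
  have e : (1 + t)⁻¹ - (x + t)⁻¹ = (x - 1) * ((1 + t) * (x + t))⁻¹ := by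
    field_simp
    ring
  rw [e, abs_mul, abs_of_pos (inv_pos.mpr (mul_pos h1 h2)), Real.rpow_neg h3.le, Real.rpow_two]
  have h4 : |x - 1| ≤ |x| + 1 := by simpa using abs_sub x 1
  have h5 : (t + m) ^ 2 ≤ (1 + t) * (x + t) := by
    rw [sq]
    exact mul_le_mul (by linarith) (by linarith) h3.le h1.le
  gcongr

lemma integrableOn_logIntegrand_bound {m : ℝ} (hm : 0 < m) (K : ℝ) :
    IntegrableOn (fun t : ℝ => K * (t + m) ^ (-2 : ℝ)) (Set.Ioi 0) :=
  (integrableOn_add_rpow_Ioi_of_lt (by norm_num) (by linarith)).const_mul K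

lemma integral_logIntegrand {x : ℝ} (hx : 0 < x) :
    ∫ t in Set.Ioi (0 : ℝ), ((1 + t)⁻¹ - (x + t)⁻¹) = Real.log x := by
  have hd : ∀ t ∈ Set.Ici (0 : ℝ), HasDerivAt
      (fun t => Real.log (1 + t) - Real.log (x + t)) ((1 + t)⁻¹ - (x + t)⁻¹) t := by
    intro t ht
    have ht' : 0 ≤ t := ht
    have a1 := ((hasDerivAt_id t).const_add 1).log (by simp only [id]; positivity)
    have a2 := ((hasDerivAt_id t).const_add x).log (by simp only [id]; positivity)
    simpa [one_div] using a1.fun_sub a2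
  have hint : IntegrableOn (fun t : ℝ => (1 + t)⁻¹ - (x + t)⁻¹) (Set.Ioi 0) := by
    refine (integrableOn_logIntegrand_bound (lt_min hx one_pos) (|x| + 1)).mono' ?_ ?_
    · exact Measurable.aestronglyMeasurable (by fun_prop)
    · filter_upwards [self_mem_ae_restrict measurableSet_Ioi] with t ht
      exact abs_logIntegrand_le (lt_min hx one_pos) (min_le_right _ _) (min_le_left _ _) ht
  have hlim : Filter.Tendsto (fun t => Real.log (1 + t) - Real.log (x + t)) Filter.atTop
      (nhds 0) := by
    have := (Real.tendsto_log_comp_add_sub_log 1).sub (Real.tendsto_log_comp_add_sub_log x)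
    simpa [add_comm] using this
  rw [integral_Ioi_of_hasDerivAt_of_tendsto
    (hd 0 Set.self_mem_Ici).continuousAt.continuousWithinAt
    (fun t ht => hd t (Set.Ioi_subset_Ici_self ht)) hint hlim]
  simp

section Operator

variable {H : Type*} [NormedAddCommGroup H] [InnerProductSpace ℂ H] [CompleteSpace H]

lemma le_of_mem_spectrum {c : ℝ} {S : H →L[ℂ] H} (hS : IsSelfAdjoint S)
    (hSc : (c : ℂ) • (1 : H →L[ℂ] H) ≤ S) : ∀ x ∈ spectrum ℝ S, c ≤ x := by
  refine (algebraMap_le_iff_le_spectrum (p := IsSelfAdjoint) (a := S)).mp ?_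
  rw [Algebra.algebraMap_eq_smul_one]
  exact hSc

lemma cfc_add_real {S : H →L[ℂ] H} (hS : IsSelfAdjoint S) (t : ℝ) :
    cfc (fun x : ℝ => x + t) S = S + (t : ℂ) • 1 := by
  rw [cfc_add_const t (fun x : ℝ => x) S, cfc_id' ℝ S, Algebra.algebraMap_eq_smul_one]
  rfl

lemma isUnit_add_real {c : ℝ} (hc : 0 < c) {S : H →L[ℂ] H} (hS : IsSelfAdjoint S)
    (hSc : (c : ℂ) • (1 : H →L[ℂ] H) ≤ S) {t : ℝ} (ht : 0 < t) :
    IsUnit (S + (t : ℂ) • 1) := by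
  rw [← cfc_add_real hS t, isUnit_cfc_iff (fun x : ℝ => x + t) S]
  intro x hx
  have := le_of_mem_spectrum hS hSc x hx
  exact ne_of_gt (by linarith)

lemma cfc_logIntegrand {c : ℝ} (hc : 0 < c) {S : H →L[ℂ] H} (hS : IsSelfAdjoint S)
    (hSc : (c : ℂ) • (1 : H →L[ℂ] H) ≤ S) {t : ℝ} (ht : 0 < t) :
    cfc (fun x : ℝ => (1 + t)⁻¹ - (x + t)⁻¹) S
      = algebraMap ℝ (H →L[ℂ] H) (1 + t)⁻¹ - Ring.inverse (S + (t : ℂ) • 1) := by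
  have hne : ∀ x ∈ spectrum ℝ S, x + t ≠ 0 := by
    intro x hx
    have := le_of_mem_spectrum hS hSc x hx
    exact ne_of_gt (by linarith)
  rw [cfc_sub (fun _ : ℝ => (1 + t)⁻¹) (fun x : ℝ => (x + t)⁻¹) S continuousOn_const
    (ContinuousOn.inv₀ (by fun_prop) hne), cfc_const _ S,
    cfc_inv (fun x : ℝ => x + t) S hne, cfc_add_real hS]

/-- The logarithm of `S ≥ c > 0` is the absolutely convergent Bochner integral of
`(1 + t)⁻¹ • 1 - (S + t)⁻¹` in operator norm. -/
lemma cfc_log_eq_integral_resolvent {c : ℝ} (hc : 0 < c) {S : H →L[ℂ] H} (hS : IsSelfAdjoint S)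
    (hSc : (c : ℂ) • (1 : H →L[ℂ] H) ≤ S) :
    IntegrableOn (fun t : ℝ => algebraMap ℝ (H →L[ℂ] H) (1 + t)⁻¹
        - Ring.inverse (S + (t : ℂ) • 1)) (Set.Ioi 0) ∧
      cfc Real.log S = ∫ t in Set.Ioi (0 : ℝ), (algebraMap ℝ (H →L[ℂ] H) (1 + t)⁻¹
        - Ring.inverse (S + (t : ℂ) • 1)) := by
  have hsp := le_of_mem_spectrum hS hSc
  have hm : 0 < min c 1 := lt_min hc one_pos
  obtain ⟨K, hK⟩ := (spectrum.isCompact (𝕜 := ℝ) S).isBounded.exists_norm_le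
  have hcont : ContinuousOn (Function.uncurry fun t x : ℝ => (1 + t)⁻¹ - (x + t)⁻¹)
      (Set.Ioi (0 : ℝ) ×ˢ spectrum ℝ S) := by
    refine ContinuousOn.sub (ContinuousOn.inv₀ (by fun_prop) ?_)
      (ContinuousOn.inv₀ (by fun_prop) ?_)
    · rintro ⟨t, x⟩ ⟨ht, hx⟩
      have ht' : 0 < t := ht
      dsimp only
      positivity
    · rintro ⟨t, x⟩ ⟨ht, hx⟩
      have ht' : 0 < t := ht
      have := hsp x hx
      exact ne_of_gt (by dsimp only; linarith)
  have hbound : ∀ᵐ t ∂(volume.restrict (Set.Ioi (0 : ℝ))), ∀ x ∈ spectrum ℝ S,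
      ‖(1 + t)⁻¹ - (x + t)⁻¹‖ ≤ (K + 1) * (t + min c 1) ^ (-2 : ℝ) := by
    filter_upwards [self_mem_ae_restrict measurableSet_Ioi] with t ht x hx
    have ht' : 0 < t := ht
    refine (abs_logIntegrand_le hm (min_le_right _ _)
      ((min_le_left _ _).trans (hsp x hx)) ht').trans ?_
    have hxK : |x| ≤ K := hK x hx
    gcongr
  have hfin := (integrableOn_logIntegrand_bound hm (K + 1)).hasFiniteIntegral
  have hI := integrableOn_cfc measurableSet_Ioi (fun t x : ℝ => (1 + t)⁻¹ - (x + t)⁻¹)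
    _ S hcont hbound hfin
  have hE := cfc_setIntegral measurableSet_Ioi (fun t x : ℝ => (1 + t)⁻¹ - (x + t)⁻¹)
    _ S hcont hbound hfin
  refine ⟨hI.congr_fun (fun t ht => cfc_logIntegrand hc hS hSc ht) measurableSet_Ioi, ?_⟩
  rw [← setIntegral_congr_fun measurableSet_Ioi fun t ht => cfc_logIntegrand hc hS hSc ht, ← hE]
  exact cfc_congr fun x hx => (integral_logIntegrand (hc.trans_le (hsp x hx))).symm

end Operator

/-- For bounded selfadjoint operators `S, T ≥ c·1` with `c > 0` on a complex Hilbert space,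
`⟨ψ, (ln T − ln S)ψ⟩ = ∫_0^∞ ⟨ψ, (S+t)⁻¹ (T−S) (T+t)⁻¹ ψ⟩ dt` for every `ψ`, where the
logarithms are defined via the continuous functional calculus and `(S+t)⁻¹, (T+t)⁻¹` are the
inverses of `S + t·1` and `T + t·1` (here realized by `Ring.inverse`, which produces the
genuine inverse since these operators are invertible for `t ≥ 0`). -/
theorem inner_log_sub_log_eq_integral_resolvent
    {H : Type*} [NormedAddCommGroup H] [InnerProductSpace ℂ H] [CompleteSpace H]
    (c : ℝ) (hc : 0 < c)
    (S T : H →L[ℂ] H) (hS : IsSelfAdjoint S) (hT : IsSelfAdjoint T)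
    (hSc : (c:ℂ) • (1 : H →L[ℂ] H) ≤ S) (hTc : (c:ℂ) • (1 : H →L[ℂ] H) ≤ T) :
    ∀ ψ : H,
      ⟪ψ, (cfc Real.log T - cfc Real.log S) ψ⟫_ℂ
        = ∫ t in Set.Ioi (0:ℝ),
            ⟪ψ, (Ring.inverse (S + (t:ℂ) • 1) * (T - S) * Ring.inverse (T + (t:ℂ) • 1)) ψ⟫_ℂ := by
  intro ψ
  obtain ⟨hSi, hSe⟩ := cfc_log_eq_integral_resolvent hc hS hSc
  obtain ⟨hTi, hTe⟩ := cfc_log_eq_integral_resolvent hc hT hTc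
  -- the resolvent identity; the scalar terms `(1 + t)⁻¹ • 1` cancel
  have hres : ∀ t ∈ Set.Ioi (0 : ℝ),
      (algebraMap ℝ (H →L[ℂ] H) (1 + t)⁻¹ - Ring.inverse (T + (t : ℂ) • 1))
        - (algebraMap ℝ (H →L[ℂ] H) (1 + t)⁻¹ - Ring.inverse (S + (t : ℂ) • 1))
      = Ring.inverse (S + (t : ℂ) • 1) * (T - S) * Ring.inverse (T + (t : ℂ) • 1) := by
    intro t ht
    have e : T - S = (T + (t : ℂ) • 1) - (S + (t : ℂ) • 1) := by abel
    rw [e, mul_sub, sub_mul, Ring.inverse_mul_cancel _ (isUnit_add_real hc hS hSc ht), one_mul,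
      Ring.mul_inverse_cancel_right _ _ (isUnit_add_real hc hT hTc ht)]
    abel
  have hint : IntegrableOn (fun t : ℝ => Ring.inverse (S + (t : ℂ) • 1) * (T - S)
      * Ring.inverse (T + (t : ℂ) • 1)) (Set.Ioi 0) :=
    IntegrableOn.congr_fun (Integrable.sub hTi hSi) hres measurableSet_Ioi
  rw [hTe, hSe, ← integral_sub hTi hSi, setIntegral_congr_fun measurableSet_Ioi hres,
    ContinuousLinearMap.integral_apply hint, integral_inner]
  exact hint.apply_continuousLinearMap ψ
end

section
/- Let h be a separable complex Hilbert space, let B be a bounded selfadjoint operator on h with 0 ≤ B ≤ 1, and let μ be a Borel probability measure on [−1,1] with μ({−1}) = μ({1}) = 0. For λ ∈ (−1,1) let T_λ = (2B−1)(1−λ(2B−1))⁻¹, a well-defined bounded selfadjoint operator since 1−λ(2B−1) ≥ (1−|λ|)·1 > 0. Let Q be a selfadjoint trace-class operator on h, and assume there exists a bounded operator M on h such that for all ψ, η ∈ h the integral ∫_{(−1,1)} ⟨ψ, T_λ η⟩ dμ(λ) converges absolutely and equals ⟨ψ, M η⟩. Then ∫_{(−1,1)} tr[ |Q|^{1/2}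 |T_λ| |Q|^{1/2} ] dμ(λ) < ∞, where |T_λ| and |Q|^{1/2} are defined via the continuous functional calculus and tr denotes the trace of a positive bounded operator. -/
/-!
Write `S = 2B - 1`, so that `-1 ≤ S ≤ 1` and `T_λ = f_λ(S)` with `f_λ(s) = s / (1 - λ s)`, a
function with the sign of `s`. Morally `|T_λ| = sgn(S) T_λ`, hence
`∫ ⟨ψ, |T_λ| ψ⟩ dμ = ⟨sgn(S) ψ, M ψ⟩ ≤ ‖M‖ ‖ψ‖²`.

The sign is replaced by the continuous contractions `g_k(s) = s / (|s| + 1/(k+1))`. For each `k`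
the operator `g_k(S) T_λ` is positive and
`∫ ⟨ψ, g_k(S) T_λ ψ⟩ dμ = ⟨g_k(S) ψ, M ψ⟩ ≤ ‖M‖ ‖ψ‖²`, while `g_k(S) T_λ → |T_λ|` in norm for each
`λ ∈ (-1, 1)` because `|f_λ| - g_k f_λ ≤ (k+1)⁻¹ (1 - |λ|)⁻¹` on `[-1, 1]`. Fatou's lemma then gives
`∫ ⟨ψ, |T_λ| ψ⟩ dμ ≤ ‖M‖ ‖ψ‖²` (`lintegral_abs_opTlam_le`). Taking `ψ = |Q|^{1/2} e_i` and summing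
over the countable basis bounds the integral of the traces by `‖M‖ tr |Q|`.
-/

open MeasureTheory
open scoped InnerProductSpace ENNReal

/-- The trace of a positive bounded operator `T`, computed in the Hilbert basis `e` as
`∑_i ⟨e_i, T e_i⟩ ∈ [0,∞]`. -/
noncomputable def posTrace {H : Type*} [NormedAddCommGroup H] [InnerProductSpace ℂ H]
    [CompleteSpace H] {ι : Type*} (e : HilbertBasis ι ℂ H) (T : H →L[ℂ] H) : ℝ≥0∞ :=
  ∑' i : ι, ENNReal.ofReal (⟪e i, T (e i)⟫_ℂ).re

/-- The operator `T_λ = (2B−1)(1−λ(2B−1))⁻¹` (with `Ring.inverse` realizing the genuine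
inverse, since `1 − λ(2B−1) ≥ (1−|λ|)·1 > 0`). -/
noncomputable def opTlam {H : Type*} [NormedAddCommGroup H] [InnerProductSpace ℂ H]
    [CompleteSpace H] (B : H →L[ℂ] H) (l : ℝ) : H →L[ℂ] H :=
  (2 • B - 1) * Ring.inverse (1 - (l:ℂ) • (2 • B - 1))

open Filter Topology

section
variable {H : Type*} [NormedAddCommGroup H] [InnerProductSpace ℂ H] [CompleteSpace H]

lemma isSelfAdjoint_two_smul_sub_one {B : H →L[ℂ] H} (hB : IsSelfAdjoint B) :
    IsSelfAdjoint (2 • B - 1) := by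
  rw [two_nsmul]
  exact (hB.add hB).sub (.one _)

lemma spectrum_two_smul_sub_one_subset {B : H →L[ℂ] H} (hB : IsSelfAdjoint B) (hB0 : 0 ≤ B)
    (hB1 : B ≤ 1) : ∀ s ∈ spectrum ℝ (2 • B - 1), s ∈ Set.Icc (-1 : ℝ) 1 := by
  have hS : IsSelfAdjoint (2 • B - 1) := isSelfAdjoint_two_smul_sub_one hB
  have h1 : algebraMap ℝ (H →L[ℂ] H) (-1) ≤ 2 • B - 1 := by
    rw [map_neg, map_one, ← sub_nonneg]
    have : 2 • B - 1 - -1 = B + B := by rw [two_nsmul]; abel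
    rw [this]; exact add_nonneg hB0 hB0
  have h2 : 2 • B - 1 ≤ algebraMap ℝ (H →L[ℂ] H) 1 := by
    rw [map_one, ← sub_nonneg]
    have : 1 - (2 • B - 1) = (1 - B) + (1 - B) := by rw [two_nsmul]; abel
    rw [this]; exact add_nonneg (sub_nonneg.2 hB1) (sub_nonneg.2 hB1)
  intro s hs
  exact ⟨(algebraMap_le_iff_le_spectrum hS).1 h1 s hs, (le_algebraMap_iff_spectrum_le hS).1 h2 s hs⟩

lemma one_sub_abs_le {l s : ℝ} (hs : s ∈ Set.Icc (-1 : ℝ) 1) : 1 - |l| ≤ 1 - l * s := by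
  have h : l * s ≤ |l| * |s| := (le_abs_self _).trans (abs_mul l s).le
  have h' : |l| * |s| ≤ |l| := mul_le_of_le_one_right (abs_nonneg l) (abs_le.2 hs)
  linarith

lemma opTlam_eq_cfc {B : H →L[ℂ] H} (hB : IsSelfAdjoint B) (hB0 : 0 ≤ B) (hB1 : B ≤ 1)
    {l : ℝ} (hl : |l| < 1) :
    opTlam B l = cfc (fun s : ℝ => s * (1 - l * s)⁻¹) (2 • B - 1) := by
  have hS : IsSelfAdjoint (2 • B - 1) := isSelfAdjoint_two_smul_sub_one hB
  have hsp := spectrum_two_smul_sub_one_subset hB hB0 hB1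
  have hne : ∀ s ∈ spectrum ℝ (2 • B - 1), 1 - l * s ≠ 0 := fun s hs => by
    have := one_sub_abs_le (l := l) (hsp s hs); intro h; linarith
  rw [cfc_mul (fun s : ℝ => s) (fun s : ℝ => (1 - l * s)⁻¹) _ (by fun_prop)
      (ContinuousOn.inv₀ (by fun_prop) hne),
    cfc_inv (fun s : ℝ => 1 - l * s) _ hne (by fun_prop) hS,
    cfc_sub (fun _ : ℝ => 1) (fun s : ℝ => l * s) _ (by fun_prop) (by fun_prop),
    cfc_const_one ℝ _ hS, cfc_const_mul l (fun s : ℝ => s) _ (by fun_prop), cfc_id' ℝ _ hS]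
  rw [opTlam, Complex.coe_smul]

/-- A continuous contraction approximating the sign function, `softSign k s → sign s` as
`k → ∞`; it replaces the spectral projections of `2B - 1`, which the continuous functional
calculus does not provide. -/
noncomputable def softSign (k : ℕ) (s : ℝ) : ℝ := s / (|s| + 1 / ((k : ℝ) + 1))

lemma continuous_softSign (k : ℕ) : Continuous (softSign k) := by
  unfold softSign
  refine continuous_id.div (by fun_prop) fun s => ?_
  positivity

lemma abs_softSign_le (k : ℕ) (s : ℝ) : |softSign k s| ≤ 1 := by
  have : 0 < |s| + 1 / ((k : ℝ) + 1) := by positivity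
  rw [softSign, abs_div, abs_of_pos this, div_le_one this]
  have : 0 < 1 / ((k : ℝ) + 1) := by positivity
  linarith

lemma softSign_mul_nonneg (k : ℕ) (s : ℝ) : 0 ≤ softSign k s * s := by
  have : softSign k s * s = s * s / (|s| + 1 / ((k : ℝ) + 1)) := by rw [softSign]; ring
  rw [this]
  exact div_nonneg (mul_self_nonneg s) (by positivity)

lemma abs_sub_softSign_mul (k : ℕ) (s : ℝ) :
    |(|s| - softSign k s * s)| ≤ 1 / ((k : ℝ) + 1) := by
  have he : 0 < 1 / ((k : ℝ) + 1) := by positivity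
  set ε := 1 / ((k : ℝ) + 1) with hε
  have hp : 0 < |s| + ε := by positivity
  have : |s| - softSign k s * s = ε * (|s| / (|s| + ε)) := by
    rw [softSign, ← hε]
    field_simp
    nlinarith [abs_mul_abs_self s]
  rw [this, abs_of_nonneg (by positivity)]
  exact mul_le_of_le_one_right he.le ((div_le_one hp).2 (by linarith))

/-- If `S = 2B - 1`, the operators `softSign k S * T_λ` are positive and converge in norm to
`|T_λ|`: on the spectrum `T_λ` is multiplication by `s / (1 - λ s)`, which has the sign of `s`. -/
lemma softSign_mul_opTlam {B : H →L[ℂ] H} (hB : IsSelfAdjoint B) (hB0 : 0 ≤ B) (hB1 : B ≤ 1)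
    {l : ℝ} (hl : |l| < 1) :
    (∀ k, 0 ≤ cfc (softSign k) (2 • B - 1) * opTlam B l) ∧
    Tendsto (fun k => cfc (softSign k) (2 • B - 1) * opTlam B l) atTop
      (𝓝 (cfc (fun x : ℝ => |x|) (opTlam B l))) := by
  have hS : IsSelfAdjoint (2 • B - 1) := isSelfAdjoint_two_smul_sub_one hB
  have hsp := spectrum_two_smul_sub_one_subset hB hB0 hB1
  have hpos : ∀ s ∈ spectrum ℝ (2 • B - 1), 0 < 1 - l * s := fun s hs => by
    have := one_sub_abs_le (l := l) (hsp s hs); linarith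
  have hc : ContinuousOn (fun s : ℝ => s * (1 - l * s)⁻¹) (spectrum ℝ (2 • B - 1)) :=
    continuousOn_id.mul (ContinuousOn.inv₀ (by fun_prop) fun s hs => (hpos s hs).ne')
  have hg : ∀ k, ContinuousOn (softSign k) (spectrum ℝ (2 • B - 1)) :=
    fun k => (continuous_softSign k).continuousOn
  have hmul : ∀ k, cfc (softSign k) (2 • B - 1) * opTlam B l =
      cfc (fun s => softSign k s * (s * (1 - l * s)⁻¹)) (2 • B - 1) := fun k => by
    rw [opTlam_eq_cfc hB hB0 hB1 hl, ← cfc_mul _ _ _ (hg k) hc]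
  have habs : cfc (fun x : ℝ => |x|) (opTlam B l) =
      cfc (fun s : ℝ => |s * (1 - l * s)⁻¹|) (2 • B - 1) := by
    rw [opTlam_eq_cfc hB hB0 hB1 hl,
      ← cfc_comp' (fun x : ℝ => |x|) _ _ (by fun_prop) hc hS]
  refine ⟨fun k => ?_, ?_⟩
  · rw [hmul]
    refine cfc_nonneg fun s hs => ?_
    rw [← mul_assoc]
    exact mul_nonneg (softSign_mul_nonneg k s) (inv_nonneg.2 (hpos s hs).le)
  · rw [tendsto_iff_norm_sub_tendsto_zero]
    have hlim : Tendsto (fun k : ℕ => 1 / ((k : ℝ) + 1) * (1 - |l|)⁻¹) atTop (𝓝 0) := by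
      simpa using tendsto_one_div_add_atTop_nhds_zero_nat.mul_const (1 - |l|)⁻¹
    refine squeeze_zero (fun _ => norm_nonneg _) (fun k => ?_) hlim
    have hl' : 0 < 1 - |l| := by linarith
    rw [hmul, habs, norm_sub_rev,
      ← cfc_sub (fun s : ℝ => |s * (1 - l * s)⁻¹|) (fun s => softSign k s * (s * (1 - l * s)⁻¹)) _
        hc.abs ((hg k).mul hc)]
    refine norm_cfc_le (by positivity) fun s hs => ?_
    have h1 : |s * (1 - l * s)⁻¹| - softSign k s * (s * (1 - l * s)⁻¹) =
        (|s| - softSign k s * s) * (1 - l * s)⁻¹ := by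
      rw [abs_mul, abs_of_pos (inv_pos.2 (hpos s hs))]; ring
    rw [h1, Real.norm_eq_abs, abs_mul, abs_of_pos (inv_pos.2 (hpos s hs))]
    exact mul_le_mul (abs_sub_softSign_mul k s) (inv_anti₀ hl' (one_sub_abs_le (hsp s hs)))
      (inv_nonneg.2 (hpos s hs).le) (by positivity)

/-- The quadratic form of `|T_λ|` is integrable in `λ`, with the bound `‖M‖ ‖ψ‖²`, where `M` is
the weak integral of `T_λ`. -/
lemma lintegral_abs_opTlam_le {B : H →L[ℂ] H} (hB : IsSelfAdjoint B) (hB0 : 0 ≤ B) (hB1 : B ≤ 1)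
    {μ : Measure ℝ} {M : H →L[ℂ] H}
    (hM : ∀ ψ η : H,
      Integrable (fun l => ⟪ψ, opTlam B l η⟫_ℂ) (μ.restrict (Set.Ioo (-1:ℝ) 1)) ∧
      (∫ l in Set.Ioo (-1:ℝ) 1, ⟪ψ, opTlam B l η⟫_ℂ ∂μ) = ⟪ψ, M η⟫_ℂ) (ψ : H) :
    AEMeasurable (fun l => ENNReal.ofReal
      (⟪ψ, cfc (fun x : ℝ => |x|) (opTlam B l) ψ⟫_ℂ).re) (μ.restrict (Set.Ioo (-1:ℝ) 1)) ∧
    ∫⁻ l in Set.Ioo (-1:ℝ) 1, ENNReal.ofReal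
      (⟪ψ, cfc (fun x : ℝ => |x|) (opTlam B l) ψ⟫_ℂ).re ∂μ ≤ ENNReal.ofReal (‖M‖ * ‖ψ‖ ^ 2) := by
  set ν := μ.restrict (Set.Ioo (-1:ℝ) 1)
  set G : ℕ → H →L[ℂ] H := fun k => cfc (softSign k) (2 • B - 1) with hG
  have hGsa : ∀ k, IsSelfAdjoint (G k) := fun k => cfc_predicate _ _
  have hGn : ∀ k, ‖G k‖ ≤ 1 := fun k =>
    norm_cfc_le zero_le_one fun s _ => abs_softSign_le k s
  have hinner : ∀ k l, ⟪ψ, (G k * opTlam B l) ψ⟫_ℂ = ⟪G k ψ, opTlam B l ψ⟫_ℂ := fun k l =>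
    ((hGsa k).isSymmetric ψ (opTlam B l ψ)).symm
  have hint : ∀ k, Integrable (fun l => (⟪ψ, (G k * opTlam B l) ψ⟫_ℂ).re) ν := fun k => by
    simp only [hinner]
    exact (hM (G k ψ) ψ).1.re
  have hmeas : ∀ k, AEMeasurable
      (fun l => ENNReal.ofReal (⟪ψ, (G k * opTlam B l) ψ⟫_ℂ).re) ν :=
    fun k => (hint k).aemeasurable.ennreal_ofReal
  have hae : ∀ᵐ l ∂ν, |l| < 1 := by
    filter_upwards [ae_restrict_mem measurableSet_Ioo] with l hl
    exact abs_lt.2 hl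
  have hlim : ∀ᵐ l ∂ν, Tendsto
      (fun k => ENNReal.ofReal (⟪ψ, (G k * opTlam B l) ψ⟫_ℂ).re) atTop
      (𝓝 (ENNReal.ofReal (⟪ψ, cfc (fun x : ℝ => |x|) (opTlam B l) ψ⟫_ℂ).re)) := by
    filter_upwards [hae] with l hl
    have hcont : Continuous (fun A : H →L[ℂ] H => ENNReal.ofReal (⟪ψ, A ψ⟫_ℂ).re) :=
      ENNReal.continuous_ofReal.comp (Complex.continuous_re.comp
        (continuous_const.inner (continuous_id.clm_apply continuous_const)))
    exact (hcont.tendsto _).comp (softSign_mul_opTlam hB hB0 hB1 hl).2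
  have hbound : ∀ k, ∫⁻ l, ENNReal.ofReal (⟪ψ, (G k * opTlam B l) ψ⟫_ℂ).re ∂ν ≤
      ENNReal.ofReal (‖M‖ * ‖ψ‖ ^ 2) := fun k => by
    rw [← ofReal_integral_eq_lintegral_ofReal (hint k)]
    · refine ENNReal.ofReal_le_ofReal ?_
      have h1 : ∫ l, (⟪ψ, (G k * opTlam B l) ψ⟫_ℂ).re ∂ν = (⟪G k ψ, M ψ⟫_ℂ).re := by
        rw [← (hM (G k ψ) ψ).2]
        simp only [hinner]
        exact integral_re (hM (G k ψ) ψ).1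
      rw [h1]
      calc (⟪G k ψ, M ψ⟫_ℂ).re ≤ ‖⟪G k ψ, M ψ⟫_ℂ‖ := Complex.re_le_norm _
        _ ≤ ‖G k ψ‖ * ‖M ψ‖ := norm_inner_le_norm _ _
        _ ≤ (1 * ‖ψ‖) * (‖M‖ * ‖ψ‖) := by
            gcongr
            · exact (G k).le_of_opNorm_le (hGn k) ψ
            · exact M.le_opNorm ψ
        _ = ‖M‖ * ‖ψ‖ ^ 2 := by ring
    · filter_upwards [hae] with l hl
      have := (ContinuousLinearMap.nonneg_iff_isPositive _).1
        ((softSign_mul_opTlam hB hB0 hB1 hl).1 k)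
      exact this.re_inner_nonneg_right ψ
  refine ⟨aemeasurable_of_tendsto_metrizable_ae _ hmeas hlim, ?_⟩
  calc _ = ∫⁻ l, liminf
        (fun k => ENNReal.ofReal (⟪ψ, (G k * opTlam B l) ψ⟫_ℂ).re) atTop ∂ν := by
        refine lintegral_congr_ae ?_
        filter_upwards [hlim] with l hl using hl.liminf_eq.symm
    _ ≤ liminf (fun k => ∫⁻ l, ENNReal.ofReal (⟪ψ, (G k * opTlam B l) ψ⟫_ℂ).re ∂ν) atTop :=
        lintegral_liminf_le' hmeas
    _ ≤ _ := liminf_le_of_le (by isBoundedDefault) fun b hb => by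
        obtain ⟨k, hk⟩ := hb.exists
        exact hk.trans (hbound k)

end

lemma HilbertBasis.countable_of_separable {H : Type*} [NormedAddCommGroup H]
    [InnerProductSpace ℂ H] [TopologicalSpace.SeparableSpace H] {ι : Type*}
    (e : HilbertBasis ι ℂ H) : Countable ι := by
  refine Pairwise.countable_of_isOpen_disjoint (s := fun i => Metric.ball (e i) (1 / 2))
    (fun i j hij => Metric.ball_disjoint_ball ?_) (fun _ => Metric.isOpen_ball)
    (fun i => ⟨e i, Metric.mem_ball_self (by norm_num)⟩)
  have h0 := e.orthonormal.inner_eq_zero hij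
  have h := norm_sub_sq (𝕜 := ℂ) (e i) (e j)
  rw [h0, e.orthonormal.norm_eq_one, e.orthonormal.norm_eq_one] at h
  simp only [map_zero] at h
  rw [dist_eq_norm]
  nlinarith [norm_nonneg (e i - e j)]

/-- (Essentially Lemma 4 of Deuchert–Hainzl–Seiringer.) Let `0 ≤ B ≤ 1` be bounded
selfadjoint on a separable complex Hilbert space, `μ` a Borel probability measure on `[−1,1]`
with `μ({−1}) = μ({1}) = 0`, `Q` a selfadjoint trace-class operator, and suppose the weak
integral `∫ T_λ dμ(λ)` exists as a bounded operator `M` (all the scalar integrals converging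
absolutely). Then `∫ tr[|Q|^{1/2} |T_λ| |Q|^{1/2}] dμ(λ) < ∞`. -/
theorem lintegral_posTrace_abs_lt_top
    {H : Type*} [NormedAddCommGroup H] [InnerProductSpace ℂ H] [CompleteSpace H]
    [TopologicalSpace.SeparableSpace H]
    (B : H →L[ℂ] H) (hB : IsSelfAdjoint B) (hB0 : 0 ≤ B) (hB1 : B ≤ 1)
    (μ : Measure ℝ) [IsProbabilityMeasure μ]
    (hμsupp : μ (Set.Icc (-1:ℝ) 1)ᶜ = 0)
    (hμm1 : μ {(-1:ℝ)} = 0) (hμ1 : μ {(1:ℝ)} = 0)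
    {ι : Type*} (e : HilbertBasis ι ℂ H)
    (Q : H →L[ℂ] H) (hQ : IsSelfAdjoint Q)
    (hQtc : posTrace e (cfc (fun x : ℝ => |x|) Q) ≠ ⊤)
    (M : H →L[ℂ] H)
    (hM : ∀ ψ η : H,
      Integrable (fun l => ⟪ψ, opTlam B l η⟫_ℂ) (μ.restrict (Set.Ioo (-1:ℝ) 1)) ∧
      (∫ l in Set.Ioo (-1:ℝ) 1, ⟪ψ, opTlam B l η⟫_ℂ ∂μ) = ⟪ψ, M η⟫_ℂ) :
    (∫⁻ l in Set.Ioo (-1:ℝ) 1,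
        posTrace e (cfc (fun x : ℝ => Real.sqrt |x|) Q * cfc (fun x : ℝ => |x|) (opTlam B l)
          * cfc (fun x : ℝ => Real.sqrt |x|) Q) ∂μ) < ⊤ := by
  have := e.countable_of_separable
  set R := cfc (fun x : ℝ => Real.sqrt |x|) Q with hR
  have hRsa : IsSelfAdjoint R := cfc_predicate _ _
  have hRR : R * R = cfc (fun x : ℝ => |x|) Q := by
    rw [hR, ← cfc_mul _ _ _ (by fun_prop) (by fun_prop)]
    exact cfc_congr fun x _ => Real.mul_self_sqrt (abs_nonneg x)
  have hmove : ∀ (A : H →L[ℂ] H) (ψ : H), ⟪ψ, (R * A * R) ψ⟫_ℂ = ⟪R ψ, A (R ψ)⟫_ℂ :=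
    fun A ψ => (hRsa.isSymmetric ψ (A (R ψ))).symm
  have hnorm : ∀ ψ : H, (⟪ψ, cfc (fun x : ℝ => |x|) Q ψ⟫_ℂ).re = ‖R ψ‖ ^ 2 := fun ψ => by
    have h := hmove 1 ψ
    rw [mul_one, hRR] at h
    rw [h]
    exact inner_self_eq_norm_sq (𝕜 := ℂ) (R ψ)
  have key := fun i => lintegral_abs_opTlam_le hB hB0 hB1 hM (R (e i))
  simp only [posTrace, hmove]
  rw [lintegral_tsum fun i => (key i).1]
  calc _ ≤ ∑' i, ENNReal.ofReal (‖M‖ * ‖R (e i)‖ ^ 2) := ENNReal.tsum_le_tsum fun i => (key i).2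
    _ = ENNReal.ofReal ‖M‖ * posTrace e (cfc (fun x : ℝ => |x|) Q) := by
        simp only [posTrace, hnorm, ENNReal.ofReal_mul (norm_nonneg M), ENNReal.tsum_mul_left]
    _ < ⊤ := ENNReal.mul_lt_top ENNReal.ofReal_lt_top hQtc.lt_top
end

section
/- Let φ: [0,1] → ℝ be continuous and differentiable on (0,1), and assume the Löwner representation hypothesis: a ∈ ℝ, b ≥ 0, and μ is a Borel probability measure on [−1,1] such that φ'(x) = a + b ∫_{[−1,1]} (2x−1)/(1−λ(2x−1)) dμ(λ) for every x ∈ (0,1). Then for all hermitian n×n complex matrices A, B with all eigenvalues of A in [0,1] and all eigenvalues of B in (0,1): H(A,B) ≥ (b/4) · tr[(A−B)²]. -/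
/-!
The inequality is Klein's: a scalar inequality `F(x, y) ≥ 0`, where `F(x, y)` is a finite sum of
products `f(x) g(y)`, passes to traces, because in eigenbases of `A` and `B`
`tr (f(A) g(B)) = ∑ i j, |⟨u_i, v_j⟩|² f(α_i) g(β_j)` with nonnegative weights that do not depend on
`f` and `g` (`exists_weights`). Here
`F(x, y) = φ(x) - φ(y) - φ'(y) (x - y) - (b/4) (x - y)²`.

The scalar inequality holds because `φ(x) - (b/4) x²` is convex. Writing `u = 2x - 1`, `v = 2y - 1`,
each Löwner kernel satisfies
`u / (1 - l u) - v / (1 - l v) = (u - v) / ((1 - l u) (1 - l v)) ≥ (u - v) / 4 = (x - y) / 2`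
for `y ≤ x` in `(0, 1)` and `|l| ≤ 1`, and averaging against the probability measure `μ` gives
`φ'(x) - φ'(y) ≥ (b/2) (x - y)` (`deriv_gap`).
-/

open scoped Matrix ComplexOrder
open MeasureTheory

lemma kernel_denom_pos {l x : ℝ} (hl : l ∈ Set.Icc (-1:ℝ) 1) (hx : x ∈ Set.Ioo (0:ℝ) 1) :
    0 < 1 - l*(2*x - 1) := by
  obtain ⟨hl1, hl2⟩ := hl
  obtain ⟨h0, h1⟩ := hx
  -- `1 - l (2x - 1) = (1 - x) (1 + l) + x (1 - l)`
  rcases le_total l 0 with h | h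
  · nlinarith [mul_nonneg (sub_nonneg.2 h1.le) (by linarith : 0 ≤ 1 + l)]
  · nlinarith [mul_nonneg h0.le (by linarith : 0 ≤ 1 - l)]

/-- For `|l| ≤ 1` the denominator of the Löwner kernel is at most `2`, so the kernel has slope at
least `1/2` in `x`. -/
lemma kernel_gap {l x y : ℝ} (hl : l ∈ Set.Icc (-1:ℝ) 1) (hx : x ∈ Set.Ioo (0:ℝ) 1)
    (hy : y ∈ Set.Ioo (0:ℝ) 1) (hyx : y ≤ x) :
    (x - y) / 2 ≤ (2*x - 1) / (1 - l*(2*x - 1)) - (2*y - 1) / (1 - l*(2*y - 1)) := by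
  have key : ∀ z ∈ Set.Ioo (0:ℝ) 1, 0 < 1 - l*(2*z-1) ∧ 1 - l*(2*z-1) ≤ 2 := by
    intro z hz
    refine ⟨kernel_denom_pos hl hz, ?_⟩
    obtain ⟨hl1, hl2⟩ := hl
    obtain ⟨h0, h1⟩ := hz
    nlinarith
  obtain ⟨p0, p2⟩ := key x hx
  obtain ⟨q0, q2⟩ := key y hy
  rw [div_sub_div _ _ p0.ne' q0.ne', le_div_iff₀ (mul_pos p0 q0)]
  have h4 : (1 - l*(2*x - 1)) * (1 - l*(2*y - 1)) ≤ 4 := by nlinarith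
  nlinarith [mul_le_mul_of_nonneg_left h4 (sub_nonneg.2 hyx)]

lemma kernel_integrable (μ : Measure ℝ) [IsProbabilityMeasure μ] {x : ℝ}
    (hx : x ∈ Set.Ioo (0:ℝ) 1) :
    IntegrableOn (fun l : ℝ => (2*x - 1) / (1 - l*(2*x - 1))) (Set.Icc (-1:ℝ) 1) μ := by
  apply ContinuousOn.integrableOn_compact isCompact_Icc
  apply ContinuousOn.div (by fun_prop) (by fun_prop)
  exact fun l hl => (kernel_denom_pos hl hx).ne'

lemma deriv_gap (φ' : ℝ → ℝ) (a b : ℝ) (μ : Measure ℝ) [IsProbabilityMeasure μ] (hb : 0 ≤ b)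
    (hμsupp : μ (Set.Icc (-1:ℝ) 1)ᶜ = 0)
    (hrep : ∀ x ∈ Set.Ioo (0:ℝ) 1,
      φ' x = a + b * ∫ l in Set.Icc (-1:ℝ) 1, (2*x - 1) / (1 - l*(2*x - 1)) ∂μ)
    {x y : ℝ} (hx : x ∈ Set.Ioo (0:ℝ) 1) (hy : y ∈ Set.Ioo (0:ℝ) 1) (hyx : y ≤ x) :
    b / 2 * (x - y) ≤ φ' x - φ' y := by
  have h1 : μ.real (Set.Icc (-1:ℝ) 1) = 1 := by
    have : μ (Set.Icc (-1:ℝ) 1) = 1 := (prob_compl_eq_zero_iff measurableSet_Icc).1 hμsupp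
    simp [Measure.real, this]
  have h2 : (x - y) / 2 ≤ (∫ l in Set.Icc (-1:ℝ) 1, (2*x - 1) / (1 - l*(2*x - 1)) ∂μ)
      - ∫ l in Set.Icc (-1:ℝ) 1, (2*y - 1) / (1 - l*(2*y - 1)) ∂μ := by
    rw [← integral_sub (kernel_integrable μ hx) (kernel_integrable μ hy)]
    calc (x - y) / 2 = ∫ _ in Set.Icc (-1:ℝ) 1, (x - y) / 2 ∂μ := by
          simp [h1]
      _ ≤ _ := setIntegral_mono_on (integrable_const _)
          ((kernel_integrable μ hx).sub (kernel_integrable μ hy)) measurableSet_Icc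
          fun l hl => kernel_gap hl hx hy hyx
  rw [hrep x hx, hrep y hy]
  nlinarith [mul_le_mul_of_nonneg_left h2 hb]

/-- A function on `[0,1]` whose derivative has slope at least `2c` on `(0,1)` lies above its tangent
parabolas with leading coefficient `c`. -/
lemma scalar_gap (φ φ' : ℝ → ℝ) (c : ℝ) (hφc : ContinuousOn φ (Set.Icc (0:ℝ) 1))
    (hφd : ∀ x ∈ Set.Ioo (0:ℝ) 1, HasDerivAt φ (φ' x) x)
    (hgap : ∀ x ∈ Set.Ioo (0:ℝ) 1, ∀ y ∈ Set.Ioo (0:ℝ) 1, y ≤ x → 2 * c * (x - y) ≤ φ' x - φ' y)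
    {x y : ℝ} (hx : x ∈ Set.Icc (0:ℝ) 1) (hy : y ∈ Set.Ioo (0:ℝ) 1) :
    0 ≤ φ x - φ y - φ' y * (x - y) - c * (x - y) ^ 2 := by
  have hd : ∀ z ∈ Set.Ioo (0:ℝ) 1, HasDerivAt (fun t => φ t - c * t ^ 2) (φ' z - 2 * c * z) z := by
    intro z hz
    have h := (hφd z hz).sub ((hasDerivAt_pow 2 z).const_mul c)
    have e : φ' z - c * ((2 : ℕ) * z ^ (2 - 1)) = φ' z - 2 * c * z := by
      norm_num; ring
    rw [e] at h
    exact h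
  have hconv : ConvexOn ℝ (Set.Icc (0:ℝ) 1) (fun t => φ t - c * t ^ 2) := by
    have hc : ContinuousOn (fun t => φ t - c * t ^ 2) (Set.Icc (0:ℝ) 1) := by fun_prop
    apply MonotoneOn.convexOn_of_deriv (convex_Icc 0 1) hc
    · rw [interior_Icc]
      exact fun z hz => (hd z hz).differentiableAt.differentiableWithinAt
    · rw [interior_Icc]
      intro s hs t ht hst
      rw [(hd s hs).deriv, (hd t ht).deriv]
      linarith [hgap t ht s hs hst]
  have hy' := Set.Ioo_subset_Icc_self hy
  rcases lt_trichotomy x y with h | rfl | h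
  · have := hconv.slope_le_of_hasDerivAt hx hy' h (hd y hy)
    rw [slope_def_field, div_le_iff₀ (sub_pos.2 h)] at this
    linarith
  · simp
  · have := hconv.le_slope_of_hasDerivAt hy' hx h (hd y hy)
    rw [slope_def_field, le_div_iff₀ (sub_pos.2 h)] at this
    linarith

/-- The weights are `w i j = |⟨u_i, v_j⟩|²` for the orthonormal eigenbases `u` of `A` and `v` of
`B`. -/
lemma exists_weights {n : ℕ} {A B : Matrix (Fin n) (Fin n) ℂ} (hA : A.IsHermitian)
    (hB : B.IsHermitian) : ∃ w : Fin n → Fin n → ℝ, (∀ i j, 0 ≤ w i j) ∧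
      ∀ f g : ℝ → ℝ, (Matrix.trace (cfc f A * cfc g B)).re =
        ∑ i, ∑ j, w i j * (f (hA.eigenvalues i) * g (hB.eigenvalues j)) := by
  set U : Matrix (Fin n) (Fin n) ℂ := (hA.eigenvectorUnitary).1 with hU
  set V : Matrix (Fin n) (Fin n) ℂ := (hB.eigenvectorUnitary).1 with hV
  refine ⟨fun i j => Complex.normSq ((star U * V) i j), fun i j => Complex.normSq_nonneg _, ?_⟩
  intro f g
  have h : Matrix.trace (cfc f A * cfc g B) =
      Matrix.trace (Matrix.diagonal (RCLike.ofReal ∘ f ∘ hA.eigenvalues) *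
        ((star U * V) * (Matrix.diagonal (RCLike.ofReal ∘ g ∘ hB.eigenvalues) *
          star (star U * V)))) := by
    rw [hA.cfc_eq, hB.cfc_eq, Matrix.IsHermitian.cfc, Matrix.IsHermitian.cfc,
      Unitary.conjStarAlgAut_apply, Unitary.conjStarAlgAut_apply, ← hU, ← hV,
      Matrix.mul_assoc U, Matrix.mul_assoc U, Matrix.trace_mul_comm U]
    simp only [star_mul, star_star, Matrix.mul_assoc]
  rw [h, Matrix.trace, Complex.re_sum]
  refine Finset.sum_congr rfl fun i _ => ?_
  rw [Matrix.diag_apply, Matrix.diagonal_mul, Matrix.mul_apply, Finset.mul_sum, Complex.re_sum]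
  refine Finset.sum_congr rfl fun j _ => ?_
  rw [Matrix.diagonal_mul, Matrix.star_apply]
  beta_reduce
  generalize (star U * V) i j = z
  simp [Complex.normSq_apply]
  ring

/-- (Klein-type lower bound.) If `φ` is continuous on `[0,1]`, differentiable on `(0,1)`,
and its derivative `φ'` admits a Löwner representation with constants `a ∈ ℝ`, `b ≥ 0` and a
Borel probability measure `μ` on `[−1,1]`, then for all hermitian matrices `A, B` with
eigenvalues of `A` in `[0,1]` and of `B` in `(0,1)`:
`H(A,B) ≥ (b/4)·tr[(A−B)²]`, where `H(A,B) = tr[φ(A) − φ(B) − φ'(B)(A−B)]`. -/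
theorem relEntropy_ge_quarter_b_trace_sq
    (φ φ' : ℝ → ℝ) (a b : ℝ) (μ : Measure ℝ) [IsProbabilityMeasure μ]
    (hφc : ContinuousOn φ (Set.Icc (0:ℝ) 1))
    (hφd : ∀ x ∈ Set.Ioo (0:ℝ) 1, HasDerivAt φ (φ' x) x)
    (hb : 0 ≤ b)
    (hμsupp : μ (Set.Icc (-1:ℝ) 1)ᶜ = 0)
    (hrep : ∀ x ∈ Set.Ioo (0:ℝ) 1,
      φ' x = a + b * ∫ l in Set.Icc (-1:ℝ) 1, (2*x - 1) / (1 - l*(2*x - 1)) ∂μ) :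
    ∀ (n : ℕ) (A B : Matrix (Fin n) (Fin n) ℂ) (hA : A.IsHermitian) (hB : B.IsHermitian),
      (∀ i, hA.eigenvalues i ∈ Set.Icc (0:ℝ) 1) →
      (∀ i, hB.eigenvalues i ∈ Set.Ioo (0:ℝ) 1) →
      (b/4) * (Matrix.trace ((A - B) * (A - B))).re
        ≤ (Matrix.trace (cfc φ A - cfc φ B - cfc φ' B * (A - B))).re := by
  intro n A B hA hB hαA hβB
  obtain ⟨w, hw, hT⟩ := exists_weights hA hB
  have hcont (M : Matrix (Fin n) (Fin n) ℂ) (f : ℝ → ℝ) : ContinuousOn f (spectrum ℝ M) :=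
    M.finite_real_spectrum.continuousOn f
  have hA' : IsSelfAdjoint A := hA
  have hB' : IsSelfAdjoint B := hB
  have eA : cfc (fun x : ℝ => x) A = A := cfc_id' ℝ A
  have eB : cfc (fun x : ℝ => x) B = B := cfc_id' ℝ B
  have oA : cfc (fun _ : ℝ => (1:ℝ)) A = 1 := cfc_const_one ℝ A
  have oB : cfc (fun _ : ℝ => (1:ℝ)) B = 1 := cfc_const_one ℝ B
  have mA : cfc (fun x : ℝ => x * x) A = A * A := by
    rw [cfc_mul _ _ A (hcont A _) (hcont A _), eA]
  have mB : cfc (fun x : ℝ => x * x) B = B * B := by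
    rw [cfc_mul _ _ B (hcont B _) (hcont B _), eB]
  have mB' : cfc (fun x : ℝ => φ' x * x) B = cfc φ' B * B := by
    rw [cfc_mul _ _ B (hcont B _) (hcont B _), eB]
  have t1 := hT φ (fun _ => 1)
  have t2 := hT (fun _ => 1) φ
  have t3 := hT (fun x => x) φ'
  have t4 := hT (fun _ => 1) (fun x => φ' x * x)
  have t5 := hT (fun x => x * x) (fun _ => 1)
  have t6 := hT (fun x => x) (fun x => x)
  have t7 := hT (fun _ => 1) (fun x => x * x)
  rw [oB, mul_one] at t1 t5
  rw [oA, one_mul] at t2 t4 t7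
  rw [eA] at t3 t6
  rw [mA] at t5
  rw [mB] at t7
  rw [mB'] at t4
  rw [eB] at t6
  have hsum : 0 ≤ ∑ i, ∑ j, w i j * (φ (hA.eigenvalues i) - φ (hB.eigenvalues j)
      - φ' (hB.eigenvalues j) * (hA.eigenvalues i - hB.eigenvalues j)
      - b / 4 * (hA.eigenvalues i - hB.eigenvalues j) ^ 2) := by
    refine Finset.sum_nonneg fun i _ => Finset.sum_nonneg fun j _ => mul_nonneg (hw i j) ?_
    refine scalar_gap φ φ' (b / 4) hφc hφd (fun x hx y hy hyx => ?_) (hαA i) (hβB j)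
    have := deriv_gap φ' a b μ hb hμsupp hrep hx hy hyx
    linarith
  -- The double sum is the combination of the trace identities `t1`–`t7`.
  have hexp : ∑ i, ∑ j, w i j * (φ (hA.eigenvalues i) - φ (hB.eigenvalues j)
      - φ' (hB.eigenvalues j) * (hA.eigenvalues i - hB.eigenvalues j)
      - b / 4 * (hA.eigenvalues i - hB.eigenvalues j) ^ 2)
      = (cfc φ A).trace.re - (cfc φ B).trace.re - (A * cfc φ' B).trace.re + (cfc φ' B * B).trace.re
        - b / 4 * ((A * A).trace.re - 2 * (A * B).trace.re + (B * B).trace.re) := by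
    rw [t1, t2, t3, t4, t5, t6, t7]
    simp only [Finset.mul_sum, ← Finset.sum_sub_distrib, ← Finset.sum_add_distrib]
    refine Finset.sum_congr rfl fun i _ => Finset.sum_congr rfl fun j _ => ?_
    ring
  rw [hexp] at hsum
  simp only [Matrix.mul_sub, Matrix.sub_mul, Matrix.trace_sub, Complex.sub_re]
  rw [Matrix.trace_mul_comm B A, Matrix.trace_mul_comm (cfc φ' B) A]
  linarith
end

section
/- Let φ: [0,1] → ℝ be continuous, convex, and differentiable on (0,1) with φ' operator monotone on (0,1). Then there exists a constant C > 0, depending only on φ, such that for every n ≥ 1 and all hermitian n×n complex matrices A, B with all eigenvalues of A in [0,1] and all eigenvalues of B in (0,1): H(A,B) ≤ C · tr[ (B⁻² + (1−B)⁻²) (A−B)² ]. -/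
/-!
Write `aᵢ, uᵢ` and `bⱼ, vⱼ` for the eigenvalues and eigenvectors of `A` and `B`. Both sides of the
inequality are sums over pairs `(i, j)` with the same nonnegative weights `|⟨uᵢ, vⱼ⟩|²`
(`relEntropy_expand`, `trace_weight_expand`), so everything reduces to the scalar inequality
`φ(a) - φ(b) - φ'(b)(a - b) ≤ C (b⁻² + (1 - b)⁻²)(a - b)²` for `a ∈ [0,1]`, `b ∈ (0,1)`
(`bregman_le`).

Let `M` bound `|φ|` on `[0,1]` and let `d = min(b, 1 - b)`. Convexity gives `|φ'(b)| ≤ 2M / d`,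
which settles the case `|a - b| ≥ d / 2`. When `|a - b| < d / 2`, the left side is at most
`(φ'(a) - φ'(b))(a - b)`, so it is enough that `φ'` has Lipschitz constant `O(M / d²)` near `b`.
This comes from monotonicity on `2 × 2` matrices alone, without Löwner's integral representation:
applied to a rank-one perturbation taking eigenvalues `l < t` to `s < r`, where
`l < s < t < r`, it yields the divided-difference inequality `f[s,t] f[l,r] ≤ f[l,s] f[t,r]` for
`f = φ'` (`IsOperatorMonotoneOn01.four_point`). As `f` is monotone, this implies
`f[s,t] ≤ f[l,s] (r - l) / (r - t)`. For `b ≤ 1/2` the choice `l = b / 4`, `r = 7 / 8` gives the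
Lipschitz bound, and `b ≥ 1/2` follows by reflection.
-/

open scoped Matrix ComplexOrder

/-- A function `f` is operator monotone on `(0,1)`: for every `k` and all hermitian `k × k`
complex matrices `S, T` with all eigenvalues in `(0,1)` such that `T - S` is positive
semidefinite, `f(T) - f(S)` is positive semidefinite (functional calculus). -/
def IsOperatorMonotoneOn01 (f : ℝ → ℝ) : Prop :=
  ∀ (k : ℕ) (S T : Matrix (Fin k) (Fin k) ℂ) (hS : S.IsHermitian) (hT : T.IsHermitian),
    (∀ i, hS.eigenvalues i ∈ Set.Ioo (0:ℝ) 1) →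
    (∀ i, hT.eigenvalues i ∈ Set.Ioo (0:ℝ) 1) →
    (T - S).PosSemidef → (cfc f T - cfc f S).PosSemidef

/-! ### The scalar inequality -/

theorem tangent_line_le {φ φ' : ℝ → ℝ}
    (hφconv : ConvexOn ℝ (Set.Icc (0:ℝ) 1) φ)
    (hφd : ∀ x ∈ Set.Ioo (0:ℝ) 1, HasDerivAt φ (φ' x) x) :
    ∀ x ∈ Set.Ioo (0:ℝ) 1, ∀ y ∈ Set.Icc (0:ℝ) 1, φ x + φ' x * (y - x) ≤ φ y := by
  intro x hx y hy
  have hx' : x ∈ Set.Icc (0:ℝ) 1 := ⟨hx.1.le, hx.2.le⟩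
  rcases lt_trichotomy x y with h | h | h
  · have := hφconv.le_slope_of_hasDerivAt hx' hy h (hφd x hx)
    rw [slope_def_field, le_div_iff₀ (by linarith)] at this
    linarith
  · subst h; simp
  · have := hφconv.slope_le_of_hasDerivAt hy hx' h (hφd x hx)
    rw [slope_def_field, div_le_iff₀ (by linarith)] at this
    linarith

/-- The scalar bound when `b` is in the left half of the interval, with `f` in the role of `φ'`.
If `|a - b| ≥ b / 2`, boundedness of `φ` and the resulting `|f b| ≤ 2 * M / b` suffice. Otherwise
the left side is at most `(f a - f b) * (a - b)`, and the four-point inequality `hq` makes `f`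
Lipschitz with constant `O(M / b ^ 2)` near `b`. -/
theorem bregman_le_of_le_half {φ f : ℝ → ℝ} {M : ℝ}
    (hsub : ∀ x ∈ Set.Ioo (0:ℝ) 1, ∀ y ∈ Set.Icc (0:ℝ) 1, φ x + f x * (y - x) ≤ φ y)
    (hM : ∀ x ∈ Set.Icc (0:ℝ) 1, |φ x| ≤ M)
    (hq : ∀ l s t r : ℝ, 0 < l → l < s → s < t → t < r → r < 1 →
      (f t - f s) * (f r - f l) * ((s - l) * (r - t)) ≤
        (f s - f l) * (f r - f t) * ((t - s) * (r - l)))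
    {a b : ℝ} (ha : a ∈ Set.Icc (0:ℝ) 1) (hb : b ∈ Set.Ioo (0:ℝ) 1) (hb2 : b ≤ 1 / 2) :
    φ a - φ b - f b * (a - b) ≤ 400 * M * (b⁻¹ ^ 2 * (a - b) ^ 2) := by
  obtain ⟨hb0, hb1⟩ := hb
  have hM0 : 0 ≤ M := (abs_nonneg _).trans (hM a ha)
  have mono : ∀ x ∈ Set.Ioo (0:ℝ) 1, ∀ y ∈ Set.Ioo (0:ℝ) 1, x < y → f x ≤ f y := by
    intro x hx y hy hxy
    have h1 := hsub x hx y ⟨hy.1.le, hy.2.le⟩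
    have h2 := hsub y hy x ⟨hx.1.le, hx.2.le⟩
    nlinarith
  have lower : ∀ x ∈ Set.Ioo (0:ℝ) 1, -(2 * M) ≤ x * f x := by
    intro x hx
    have h1 := hsub x hx 0 (by simp)
    have h2 := abs_le.1 (hM x ⟨hx.1.le, hx.2.le⟩)
    have h3 := abs_le.1 (hM 0 (by simp))
    nlinarith
  have upper : ∀ x ∈ Set.Ioo (0:ℝ) 1, (1 - x) * f x ≤ 2 * M := by
    intro x hx
    have h1 := hsub x hx 1 (by simp)
    have h2 := abs_le.1 (hM x ⟨hx.1.le, hx.2.le⟩)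
    have h3 := abs_le.1 (hM 1 (by simp))
    nlinarith
  -- Local Lipschitz bound, from the four-point inequality at `b / 4 < s < t < 7 / 8`.
  have lip : ∀ s t : ℝ, b / 2 < s → s ≤ b → s < t → t < 3 * b / 2 →
      (f t - f s) * b ^ 2 ≤ 320 * M * (t - s) := by
    intro s t hs hsb hst ht
    have hl : b / 4 ∈ Set.Ioo (0:ℝ) 1 := ⟨by linarith, by linarith⟩
    have hs' : s ∈ Set.Ioo (0:ℝ) 1 := ⟨by linarith, by linarith⟩
    have ht' : t ∈ Set.Ioo (0:ℝ) 1 := ⟨by linarith, by linarith⟩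
    have hr : (7 / 8 : ℝ) ∈ Set.Ioo (0:ℝ) 1 := by norm_num
    have key := hq (b / 4) s t (7 / 8) hl.1 (by linarith) hst (by linarith) (by norm_num)
    have m1 := mono _ hl _ hs' (by linarith)
    have m2 := mono _ hs' _ ht' hst
    have m3 := mono _ ht' _ hr (by linarith)
    have hp : b * (f s - f (b / 4)) ≤ 10 * M := by
      have h1 := upper s hs'
      have h2 := lower _ hl
      have h3 : f s ≤ 4 * M := by
        by_contra! h
        nlinarith
      nlinarith
    have hαγ : b / 32 ≤ (s - b / 4) * (7 / 8 - t) := by nlinarith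
    have step : (f t - f s) * ((s - b / 4) * (7 / 8 - t)) ≤ (f s - f (b / 4)) * (t - s) := by
      rcases eq_or_lt_of_le (show 0 ≤ f (7/8) - f (b/4) by linarith) with h0 | h0
      · have : f t - f s = 0 := by linarith
        rw [this, zero_mul]
        exact mul_nonneg (by linarith) (by linarith)
      · refine le_of_mul_le_mul_right ?_ h0
        calc _ = (f t - f s) * (f (7/8) - f (b/4)) * ((s - b / 4) * (7 / 8 - t)) := by ring
          _ ≤ _ := key
          _ = (f (7/8) - f t) * (7/8 - b/4) * ((f s - f (b / 4)) * (t - s)) := by ring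
          _ ≤ (f (7/8) - f (b/4)) * 1 * ((f s - f (b / 4)) * (t - s)) := by
            refine mul_le_mul_of_nonneg_right ?_ (mul_nonneg (by linarith) (by linarith))
            exact mul_le_mul (by linarith) (by linarith) (by linarith) h0.le
          _ = _ := by ring
    have e1 : (f t - f s) * (b / 32) ≤ (f s - f (b / 4)) * (t - s) :=
      (mul_le_mul_of_nonneg_left hαγ (by linarith)).trans step
    have e2 := mul_le_mul_of_nonneg_right hp (show 0 ≤ t - s by linarith)
    nlinarith
  suffices h : (φ a - φ b - f b * (a - b)) * b ^ 2 ≤ 400 * M * (a - b) ^ 2 by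
    rw [inv_pow, ← div_eq_inv_mul, mul_div_assoc', le_div_iff₀ (by positivity)]
    exact h
  have hbI : b ∈ Set.Ioo (0:ℝ) 1 := ⟨hb0, hb1⟩
  have ub := upper b hbI
  have lb := lower b hbI
  have ha' := abs_le.1 (hM a ha)
  have hb' := abs_le.1 (hM b ⟨hb0.le, hb1.le⟩)
  have habs : |b * f b| ≤ 2 * M := by
    rw [abs_le]
    refine ⟨lb, ?_⟩
    rcases le_total (f b) 0 with h | h <;> nlinarith
  rcases le_or_gt (b / 2) |a - b| with hfar | hnear
  · have h1 : φ a - φ b ≤ 2 * M := by linarith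
    have h2 : -(b * f b) * (a - b) ≤ 2 * M * |a - b| := by
      refine (le_abs_self _).trans ?_
      rw [abs_mul, abs_neg]
      exact mul_le_mul_of_nonneg_right habs (abs_nonneg _)
    rw [← sq_abs (a - b)]
    set x := |a - b|
    have h3 : b ≤ 2 * x := by linarith
    have e1 : (φ a - φ b) * b ^ 2 ≤ 2 * M * (2 * x) ^ 2 :=
      mul_le_mul h1 (by gcongr) (by positivity) (by positivity)
    have e2 : -(b * f b) * (a - b) * b ≤ 2 * M * x * (2 * x) :=
      mul_le_mul h2 h3 hb0.le (by positivity)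
    nlinarith [mul_nonneg hM0 (sq_nonneg x)]
  · rw [abs_lt] at hnear
    have haI : a ∈ Set.Ioo (0:ℝ) 1 := ⟨by linarith, by linarith⟩
    have g := hsub a haI b ⟨hb0.le, hb1.le⟩
    have h1 : φ a - φ b - f b * (a - b) ≤ (f a - f b) * (a - b) := by linarith
    have h2 := mul_le_mul_of_nonneg_right h1 (sq_nonneg b)
    refine h2.trans ?_
    have h4 := mul_nonneg hM0 (sq_nonneg (a - b))
    rcases lt_trichotomy a b with h | h | h
    · have := mul_le_mul_of_nonneg_right
        (lip a b (by linarith) h.le h (by linarith)) (show 0 ≤ b - a by linarith)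
      nlinarith
    · subst h; simp
    · have := mul_le_mul_of_nonneg_right
        (lip b a (by linarith) le_rfl h (by linarith)) (show 0 ≤ a - b by linarith)
      nlinarith

/-- The scalar form of the theorem. The hypotheses are invariant under the reflection
`x ↦ 1 - x`, which reduces the claim to `b ≤ 1 / 2`. -/
theorem bregman_le {φ f : ℝ → ℝ} {M : ℝ}
    (hsub : ∀ x ∈ Set.Ioo (0:ℝ) 1, ∀ y ∈ Set.Icc (0:ℝ) 1, φ x + f x * (y - x) ≤ φ y)
    (hM : ∀ x ∈ Set.Icc (0:ℝ) 1, |φ x| ≤ M)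
    (hq : ∀ l s t r : ℝ, 0 < l → l < s → s < t → t < r → r < 1 →
      (f t - f s) * (f r - f l) * ((s - l) * (r - t)) ≤
        (f s - f l) * (f r - f t) * ((t - s) * (r - l)))
    {a b : ℝ} (ha : a ∈ Set.Icc (0:ℝ) 1) (hb : b ∈ Set.Ioo (0:ℝ) 1) :
    φ a - φ b - f b * (a - b) ≤ 400 * M * ((b⁻¹ ^ 2 + (1 - b)⁻¹ ^ 2) * (a - b) ^ 2) := by
  have hM0 : 0 ≤ M := (abs_nonneg _).trans (hM a ha)
  rcases le_total b (1 / 2) with h | h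
  · refine (bregman_le_of_le_half hsub hM hq ha hb h).trans ?_
    gcongr
    exact le_add_of_nonneg_right (sq_nonneg _)
  · have key := bregman_le_of_le_half (φ := fun x => φ (1 - x)) (f := fun x => -f (1 - x)) (M := M)
      (a := 1 - a) (b := 1 - b) ?_ ?_ ?_ ?_ ?_ (by linarith)
    · simp only [sub_sub_cancel] at key
      calc _ = φ a - φ b - -f b * (1 - a - (1 - b)) := by ring
        _ ≤ _ := key
        _ = 400 * M * ((1 - b)⁻¹ ^ 2 * (a - b) ^ 2) := by ring
        _ ≤ _ := by
          gcongr
          exact le_add_of_nonneg_left (sq_nonneg _)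
    · intro x hx y hy
      have := hsub (1 - x) ⟨by linarith [hx.2], by linarith [hx.1]⟩
        (1 - y) ⟨by linarith [hy.2], by linarith [hy.1]⟩
      linarith
    · intro x hx
      exact hM _ ⟨by linarith [hx.2], by linarith [hx.1]⟩
    · intro l s t r h1 h2 h3 h4 h5
      have := hq (1 - r) (1 - t) (1 - s) (1 - l) (by linarith) (by linarith) (by linarith)
        (by linarith) (by linarith)
      linarith
    · exact ⟨by linarith [ha.2], by linarith [ha.1]⟩
    · exact ⟨by linarith [hb.2], by linarith [hb.1]⟩

/-! ### Two-by-two matrices and the four-point inequality -/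

/-- Trace `x + y` and determinant `x * y` force the eigenvalues to be `x` or `y`. -/
theorem mem_spectrum_two {N : Matrix (Fin 2) (Fin 2) ℂ} {x y : ℝ}
    (htr : N 0 0 + N 1 1 = x + y) (hdet : N 0 0 * N 1 1 - N 0 1 * N 1 0 = x * y)
    {z : ℝ} (hz : z ∈ spectrum ℝ N) : z = x ∨ z = y := by
  rw [spectrum.mem_iff, Matrix.isUnit_iff_isUnit_det, isUnit_iff_ne_zero, not_not,
    Matrix.det_fin_two] at hz
  simp [Matrix.algebraMap_matrix_apply] at hz
  have h : ((z : ℂ) - x) * (z - y) = 0 := by linear_combination hz + z * htr - hdet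
  rcases mul_eq_zero.1 h with h | h
  · left; exact_mod_cast sub_eq_zero.1 h
  · right; exact_mod_cast sub_eq_zero.1 h

/-- For a `2 × 2` hermitian matrix with distinct eigenvalues `x` and `y`, the functional
calculus is linear interpolation of `f` between `x` and `y`. -/
theorem cfc_two {N : Matrix (Fin 2) (Fin 2) ℂ} (hN : N.IsHermitian) {x y : ℝ} (hxy : x < y)
    (htr : N 0 0 + N 1 1 = x + y) (hdet : N 0 0 * N 1 1 - N 0 1 * N 1 0 = x * y) (f : ℝ → ℝ) :
    cfc f N = (f x - (f y - f x) / (y - x) * x) • (1 : Matrix (Fin 2) (Fin 2) ℂ)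
      + ((f y - f x) / (y - x)) • N := by
  have hN' : IsSelfAdjoint N := hN
  set k := (f y - f x) / (y - x) with hk
  have e : Set.EqOn f (fun z => (f x - k * x) + k * z) (spectrum ℝ N) := by
    intro z hz
    rcases mem_spectrum_two htr hdet hz with rfl | rfl
    · simp only; ring
    · have : z - x ≠ 0 := by linarith
      simp only [hk]; field_simp; ring
  rw [cfc_congr e, cfc_const_add _ _ _, cfc_const_mul_id _ _, Algebra.algebraMap_eq_smul_one]

/-- The four-point inequality `f[s,t] f[l,r] ≤ f[l,s] f[t,r]` for divided differences, cleared of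
denominators. It is the nonnegativity of `det (f(T) - f(S))` for `S = diag(l, t)` and the rank-one
perturbation `T = S + v vᵀ` with eigenvalues `s` and `r`. -/
theorem IsOperatorMonotoneOn01.four_point {f : ℝ → ℝ} (hf : IsOperatorMonotoneOn01 f) {l s t r : ℝ}
    (hl : 0 < l) (hls : l < s) (hst : s < t) (htr : t < r) (hr : r < 1) :
    (f t - f s) * (f r - f l) * ((s - l) * (r - t)) ≤
      (f s - f l) * (f r - f t) * ((t - s) * (r - l)) := by
  have hlt : 0 < t - l := by linarith
  have hsr : 0 < r - s := by linarith
  -- `v = (p, q)` is determined by `det (T - z) = (s - z) * (r - z)` at `z = l` and `z = t`.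
  set p : ℝ := √((s - l) * (r - l) / (t - l)) with hp
  set q : ℝ := √((t - s) * (r - t) / (t - l)) with hq
  have hp2 : p ^ 2 = (s - l) * (r - l) / (t - l) :=
    Real.sq_sqrt (div_nonneg (mul_nonneg (by linarith) (by linarith)) hlt.le)
  have hq2 : q ^ 2 = (t - s) * (r - t) / (t - l) :=
    Real.sq_sqrt (div_nonneg (mul_nonneg (by linarith) (by linarith)) hlt.le)
  let v : Fin 2 → ℂ := ![(p : ℂ), (q : ℂ)]
  let S : Matrix (Fin 2) (Fin 2) ℂ := !![(l : ℂ), 0; 0, (t : ℂ)]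
  let T : Matrix (Fin 2) (Fin 2) ℂ :=
    !![((l + p ^ 2 : ℝ) : ℂ), ((p * q : ℝ) : ℂ); ((p * q : ℝ) : ℂ), ((t + q ^ 2 : ℝ) : ℂ)]
  have hS : S.IsHermitian := by
    ext i j; fin_cases i <;> fin_cases j <;> simp [S]
  have hT : T.IsHermitian := by
    ext i j; fin_cases i <;> fin_cases j <;> simp [T]
  have trS : S 0 0 + S 1 1 = (l : ℂ) + t := by simp [S]
  have detS : S 0 0 * S 1 1 - S 0 1 * S 1 0 = (l : ℂ) * t := by simp [S]
  have e1 : p ^ 2 + q ^ 2 = s + r - l - t := by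
    rw [hp2, hq2]; field_simp; ring
  have e2 : l * q ^ 2 + t * p ^ 2 = s * r - l * t := by
    rw [hp2, hq2]; field_simp; ring
  have trT : T 0 0 + T 1 1 = (s : ℂ) + r := by
    simp only [T, Matrix.of_apply, Matrix.cons_val', Matrix.cons_val_zero, Matrix.cons_val_one,
      Matrix.cons_val_fin_one]
    norm_cast
    linarith
  have detT : T 0 0 * T 1 1 - T 0 1 * T 1 0 = (s : ℂ) * r := by
    simp only [T, Matrix.of_apply, Matrix.cons_val', Matrix.cons_val_zero, Matrix.cons_val_one,
      Matrix.cons_val_fin_one]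
    norm_cast
    linarith
  have hTS : (T - S).PosSemidef := by
    have : T - S = Matrix.vecMulVec v (star v) := by
      ext i j; fin_cases i <;> fin_cases j <;> simp [S, T, v, Matrix.vecMulVec_apply] <;> ring
    rw [this]
    exact Matrix.posSemidef_vecMulVec_self_star v
  have key := hf 2 S T hS hT ?_ ?_ hTS
  · rw [cfc_two hS (by linarith) trS detS, cfc_two hT (by linarith) trT detT] at key
    have hd := key.det_nonneg
    rw [Matrix.det_fin_two] at hd
    set k := (f r - f s) / (r - s) with hk
    set m := (f t - f l) / (t - l) with hm
    simp [S, T] at hd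
    norm_cast at hd
    have hml : m * (t - l) = f t - f l := by rw [hm]; field_simp
    have hkr : k * (r - s) = f r - f s := by rw [hk]; field_simp
    have h11 : f s - k * s + k * (l + p ^ 2) - (f l - m * l + m * l)
        = (f s - f l) + k * ((s - l) * (r - t) / (t - l)) := by
      rw [hp2]; field_simp; ring
    have h22 : f s - k * s + k * (t + q ^ 2) - (f l - m * l + m * t)
        = -(f t - f s) + k * ((t - s) * (r - l) / (t - l)) := by
      rw [hq2]
      have : f l - m * l + m * t = f t := by linarith
      rw [this]; field_simp; ring
    replace hd : 0 ≤ (f s - k * s + k * (l + p ^ 2) - (f l - m * l + m * l)) *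
        (f s - k * s + k * (t + q ^ 2) - (f l - m * l + m * t)) -
        k * (p * q) * (k * (p * q)) := by linarith
    rw [h11, h22] at hd
    have hpq : k * (p * q) * (k * (p * q)) =
        k ^ 2 * ((s - l) * (r - l) / (t - l)) * ((t - s) * (r - t) / (t - l)) := by
      rw [← hp2, ← hq2]; ring
    rw [hpq] at hd
    have h := mul_nonneg hd (mul_nonneg hlt.le hsr.le)
    have : (((f s - f l) + k * ((s - l) * (r - t) / (t - l))) *
        (-(f t - f s) + k * ((t - s) * (r - l) / (t - l))) -
        k ^ 2 * ((s - l) * (r - l) / (t - l)) * ((t - s) * (r - t) / (t - l))) *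
        ((t - l) * (r - s)) =
        (f s - f l) * (f r - f t) * ((t - s) * (r - l)) -
          (f t - f s) * (f r - f l) * ((s - l) * (r - t)) := by
      rw [hk]; field_simp; ring
    linarith
  · intro i
    have : hS.eigenvalues i ∈ spectrum ℝ S := by
      rw [hS.spectrum_real_eq_range_eigenvalues]; exact ⟨i, rfl⟩
    rcases mem_spectrum_two trS detS this with h | h <;> rw [h] <;> constructor <;> linarith
  · intro i
    have : hT.eigenvalues i ∈ spectrum ℝ T := by
      rw [hT.spectrum_real_eq_range_eigenvalues]; exact ⟨i, rfl⟩
    rcases mem_spectrum_two trT detT this with h | h <;> rw [h] <;> constructor <;> linarith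

/-! ### Traces in the eigenbases -/

/-- Multiplicativity of the functional calculus without continuity assumptions: every function is
continuous on the finite spectrum of a matrix. -/
theorem cfc_mul_matrix {n : ℕ} {B : Matrix (Fin n) (Fin n) ℂ}
    (g h : ℝ → ℝ) : cfc (fun x => g x * h x) B = cfc g B * cfc h B :=
  cfc_mul g h B (Matrix.finite_real_spectrum.continuousOn _)
    (Matrix.finite_real_spectrum.continuousOn _)

/-- The squared modulus `|⟨uᵢ, vⱼ⟩|²` of the overlap of the `i`-th eigenvector of `A` with the
`j`-th eigenvector of `B`, for the orthonormal eigenbases chosen by Mathlib. -/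
noncomputable def overlap {n : ℕ} {A B : Matrix (Fin n) (Fin n) ℂ}
    (hA : A.IsHermitian) (hB : B.IsHermitian) (i j : Fin n) : ℝ :=
  Complex.normSq ((star (hA.eigenvectorUnitary : Matrix (Fin n) (Fin n) ℂ) *
    (hB.eigenvectorUnitary : Matrix (Fin n) (Fin n) ℂ)) i j)

theorem trace_cfc_mul_cfc {n : ℕ} {A B : Matrix (Fin n) (Fin n) ℂ}
    (hA : A.IsHermitian) (hB : B.IsHermitian) (g h : ℝ → ℝ) :
    (Matrix.trace (cfc g A * cfc h B)).re =
      ∑ i, ∑ j, overlap hA hB i j * (g (hA.eigenvalues i) * h (hB.eigenvalues j)) := by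
  rw [hA.cfc_eq, hB.cfc_eq, Matrix.IsHermitian.cfc, Matrix.IsHermitian.cfc,
    Unitary.conjStarAlgAut_apply, Unitary.conjStarAlgAut_apply]
  unfold overlap
  set U : Matrix (Fin n) (Fin n) ℂ := (hA.eigenvectorUnitary : Matrix (Fin n) (Fin n) ℂ)
  set V : Matrix (Fin n) (Fin n) ℂ := (hB.eigenvectorUnitary : Matrix (Fin n) (Fin n) ℂ)
  set D := Matrix.diagonal (RCLike.ofReal ∘ g ∘ hA.eigenvalues : Fin n → ℂ) with hD
  set E := Matrix.diagonal (RCLike.ofReal ∘ h ∘ hB.eigenvalues : Fin n → ℂ) with hE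
  have : Matrix.trace (U * D * star U * (V * E * star V)) =
      Matrix.trace (D * (star U * V) * (E * star (star U * V))) := by
    rw [Matrix.mul_assoc U, Matrix.mul_assoc U, Matrix.trace_mul_comm U, star_mul, star_star]
    simp only [Matrix.mul_assoc]
  rw [this]
  set W := star U * V
  rw [Matrix.trace, Complex.re_sum]
  refine Finset.sum_congr rfl fun i _ => ?_
  rw [Matrix.diag_apply, Matrix.mul_apply, Complex.re_sum]
  refine Finset.sum_congr rfl fun j _ => ?_
  rw [hD, hE, Matrix.diagonal_mul, Matrix.diagonal_mul, Matrix.star_apply]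
  simp [Complex.normSq_apply]
  ring

theorem inv_sq_add_inv_sq_eq_cfc {n : ℕ} {B : Matrix (Fin n) (Fin n) ℂ}
    (hB : B.IsHermitian) (h : ∀ i, hB.eigenvalues i ∈ Set.Ioo (0:ℝ) 1) :
    B⁻¹ ^ 2 + (1 - B)⁻¹ ^ 2 = cfc (fun x : ℝ => x⁻¹ ^ 2 + (1 - x)⁻¹ ^ 2) B := by
  have hB' : IsSelfAdjoint B := hB
  have hfin : ∀ g : ℝ → ℝ, ContinuousOn g (spectrum ℝ B) := fun g =>
    Matrix.finite_real_spectrum.continuousOn g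
  have hsp : ∀ x ∈ spectrum ℝ B, x ∈ Set.Ioo (0:ℝ) 1 := by
    rw [hB.spectrum_real_eq_range_eigenvalues]
    rintro _ ⟨i, rfl⟩
    exact h i
  have e1 : B⁻¹ = cfc (fun x : ℝ => x⁻¹) B := by
    rw [Matrix.nonsing_inv_eq_ringInverse, cfc_inv (fun x => x) B (fun x hx => (hsp x hx).1.ne'),
      cfc_id' ℝ B]
  have e2 : (1 - B)⁻¹ = cfc (fun x : ℝ => (1 - x)⁻¹) B := by
    rw [Matrix.nonsing_inv_eq_ringInverse, cfc_inv (fun x => 1 - x) B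
      (fun x hx => (sub_pos.2 (hsp x hx).2).ne'), cfc_sub _ _ _ (hfin _) (hfin _),
      cfc_id' ℝ B, cfc_const_one ℝ B]
  rw [e1, e2, ← cfc_pow _ _ _ (hfin _), ← cfc_pow _ _ _ (hfin _),
    ← cfc_add _ _ _ (hfin _) (hfin _)]

theorem overlap_nonneg {n : ℕ} {A B : Matrix (Fin n) (Fin n) ℂ}
    (hA : A.IsHermitian) (hB : B.IsHermitian) (i j : Fin n) : 0 ≤ overlap hA hB i j :=
  Complex.normSq_nonneg _

/-- The relative entropy is the sum of the scalar Bregman divergence of `φ` over pairs of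
eigenvalues, weighted by the overlaps. -/
theorem relEntropy_expand {n : ℕ} {A B : Matrix (Fin n) (Fin n) ℂ}
    (hA : A.IsHermitian) (hB : B.IsHermitian) (φ f : ℝ → ℝ) :
    (Matrix.trace (cfc φ A - cfc φ B - cfc f B * (A - B))).re =
      ∑ i, ∑ j, overlap hA hB i j * (φ (hA.eigenvalues i) - φ (hB.eigenvalues j)
        - f (hB.eigenvalues j) * (hA.eigenvalues i - hB.eigenvalues j)) := by
  have hA' : IsSelfAdjoint A := hA
  have hB' : IsSelfAdjoint B := hB
  have t1 := trace_cfc_mul_cfc hA hB φ (fun _ => 1)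
  have t2 := trace_cfc_mul_cfc hA hB (fun _ => 1) φ
  have t3 := trace_cfc_mul_cfc hA hB (fun x => x) f
  have t4 := trace_cfc_mul_cfc hA hB (fun _ => 1) (fun x => f x * x)
  rw [cfc_mul_matrix] at t4
  simp only [cfc_id' ℝ A, cfc_id' ℝ B, cfc_const_one ℝ A, cfc_const_one ℝ B, mul_one, one_mul]
    at t1 t2 t3 t4
  rw [mul_sub, Matrix.trace_sub, Matrix.trace_sub, Matrix.trace_sub, Matrix.trace_mul_comm _ A]
  simp only [Complex.sub_re, t1, t2, t3, t4, ← Finset.sum_sub_distrib]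
  refine Finset.sum_congr rfl fun i _ => Finset.sum_congr rfl fun j _ => ?_
  ring

/-- The weighted quadratic trace on the right-hand side, as a sum with the same overlaps. -/
theorem trace_weight_expand {n : ℕ} {A B : Matrix (Fin n) (Fin n) ℂ}
    (hA : A.IsHermitian) (hB : B.IsHermitian) (w : ℝ → ℝ) :
    (Matrix.trace (cfc w B * ((A - B) * (A - B)))).re =
      ∑ i, ∑ j, overlap hA hB i j * (w (hB.eigenvalues j)
        * (hA.eigenvalues i - hB.eigenvalues j) ^ 2) := by
  have hA' : IsSelfAdjoint A := hA
  have hB' : IsSelfAdjoint B := hB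
  have t1 := trace_cfc_mul_cfc hA hB (fun x => x * x) w
  have t2 := trace_cfc_mul_cfc hA hB (fun x => x) (fun x => w x * x)
  have t3 := trace_cfc_mul_cfc hA hB (fun x => x) (fun x => x * w x)
  have t4 := trace_cfc_mul_cfc hA hB (fun _ => 1) (fun x => w x * (x * x))
  simp only [cfc_mul_matrix, cfc_id' ℝ A, cfc_id' ℝ B, cfc_const_one ℝ A, one_mul]
    at t1 t2 t3 t4
  have e : Matrix.trace (cfc w B * ((A - B) * (A - B))) =
      Matrix.trace (A * A * cfc w B) - Matrix.trace (A * (cfc w B * B))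
        - Matrix.trace (A * (B * cfc w B)) + Matrix.trace (cfc w B * (B * B)) := by
    rw [Matrix.trace_mul_comm (A * A), Matrix.trace_mul_comm A (cfc w B * B),
      ← Matrix.mul_assoc A B, Matrix.trace_mul_comm (A * B), ← Matrix.trace_sub,
      ← Matrix.trace_sub, ← Matrix.trace_add]
    congr 1
    noncomm_ring
  rw [e]
  simp only [Complex.sub_re, Complex.add_re, t1, t2, t3, t4, ← Finset.sum_sub_distrib,
    ← Finset.sum_add_distrib]
  refine Finset.sum_congr rfl fun i _ => Finset.sum_congr rfl fun j _ => ?_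
  ring

/-- (Theorem 3 of Lewin–Sabin.) If `φ` is continuous and convex on `[0,1]`, differentiable on
`(0,1)`, and `φ'` is operator monotone on `(0,1)`, then there is a constant `C > 0`,
depending only on `φ`, such that for all `n ≥ 1` and all hermitian `n × n` matrices `A, B`
with eigenvalues of `A` in `[0,1]` and of `B` in `(0,1)`:
`H(A,B) ≤ C·tr[(B⁻² + (1−B)⁻²)(A−B)²]`. -/
theorem relEntropy_le_const_trace_inv_sq
    (φ φ' : ℝ → ℝ)
    (hφc : ContinuousOn φ (Set.Icc (0:ℝ) 1))
    (hφconv : ConvexOn ℝ (Set.Icc (0:ℝ) 1) φ)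
    (hφd : ∀ x ∈ Set.Ioo (0:ℝ) 1, HasDerivAt φ (φ' x) x)
    (hφ'mono : IsOperatorMonotoneOn01 φ') :
    ∃ C > (0:ℝ), ∀ (n : ℕ), 1 ≤ n →
      ∀ (A B : Matrix (Fin n) (Fin n) ℂ) (hA : A.IsHermitian) (hB : B.IsHermitian),
        (∀ i, hA.eigenvalues i ∈ Set.Icc (0:ℝ) 1) →
        (∀ i, hB.eigenvalues i ∈ Set.Ioo (0:ℝ) 1) →
        (Matrix.trace (cfc φ A - cfc φ B - cfc φ' B * (A - B))).re
          ≤ C * (Matrix.trace ((B⁻¹^2 + ((1 - B)⁻¹)^2) * ((A - B) * (A - B)))).re := by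
  obtain ⟨M, hM⟩ := isCompact_Icc.exists_bound_of_continuousOn hφc
  have hM0 : 0 ≤ M := (norm_nonneg _).trans (hM 0 (by simp))
  refine ⟨400 * M + 1, by positivity, fun n _ A B hA hB hAe hBe => ?_⟩
  rw [inv_sq_add_inv_sq_eq_cfc hB hBe, relEntropy_expand hA hB, trace_weight_expand hA hB]
  simp only [Finset.mul_sum]
  refine Finset.sum_le_sum fun i _ => Finset.sum_le_sum fun j _ => ?_
  have key := bregman_le (tangent_line_le hφconv hφd) hM
    (fun l s t r => hφ'mono.four_point) (hAe i) (hBe j)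
  rw [mul_left_comm]
  refine mul_le_mul_of_nonneg_left (key.trans ?_) (overlap_nonneg hA hB i j)
  exact mul_le_mul_of_nonneg_right (by linarith) (by positivity)
end
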